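/- arXiv:math/0009183 — 2 statements merged into one kernel-verified Lean document; each statement's English description precedes it below -/
import Mathlib

section
/- Let λ and μ be gl_n-highest weights. Assume that for each pair 1 ≤ i < j ≤ n one has: either (m_j ∉ ⟨l_j, l_i⟩ and m_i ∉ ⟨l_j, l_i⟩) or (l_j ∉ ⟨m_j, m_i⟩ and l_i ∉ ⟨m_j, m_i⟩); assume moreover that m_1 ∉ ⟨l_n, l_1⟩ and m_n ∉ ⟨l_n, l_1⟩. Let η ∈ L(λ) and η' ∈ L(μ) be lowest vectors. If ζ' ∈ L(λ)⊗L(μ) satisfies (E_{ij}⊗1 + 1⊗E_{ij})ζ' = 0 and (Σ_{a=1}^n E_{ia}⊗E_{aj})ζ' = 0 for all 1 ≤ j < i ≤ n (i.e., t_{ij}(u)ζ' = 0 for all i > j), then ζ' is a scalar multiple of η⊗η'. -/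
open scoped TensorProduct

/-- An `n`-tuple of complex numbers is a `gl_n`-highest weight if the consecutive
differences `λ_i - λ_{i+1}` are non-negative integers. -/
def IsGLHighestWeight (n : ℕ) (lam : Fin n → ℂ) : Prop :=
  ∀ i : Fin n, ∀ h : (i : ℕ) + 1 < n, ∃ N : ℕ, lam i - lam ⟨(i : ℕ) + 1, h⟩ = N

/-- A realization of the irreducible finite-dimensional `gl_n`-module `L(λ)`
with highest weight `lam`, given by the action of the matrix units `E i j`. -/
structure GLRep (n : ℕ) (lam : Fin n → ℂ) where
  V : Type
  [instAddCommGroup : AddCommGroup V]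
  [instModule : Module ℂ V]
  [instFiniteDimensional : FiniteDimensional ℂ V]
  E : Fin n → Fin n → (V →ₗ[ℂ] V)
  commRel : ∀ i j k l : Fin n,
    E i j ∘ₗ E k l - E k l ∘ₗ E i j
      = (if j = k then E i l else 0) - (if l = i then E k j else 0)
  hv : V
  hv_ne : hv ≠ 0
  hv_upper : ∀ i j : Fin n, i < j → E i j hv = 0
  hv_diag : ∀ i : Fin n, E i i hv = lam i • hv
  irreducible : ∀ U : Submodule ℂ V,
    (∀ i j : Fin n, ∀ v ∈ U, E i j v ∈ U) → U = ⊥ ∨ U = ⊤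

attribute [instance] GLRep.instAddCommGroup GLRep.instModule GLRep.instFiniteDimensional

/-- The action of the Yangian generator `t_{ij}^{(1)}` on `L(λ) ⊗ L(μ)`
(both evaluation modules evaluated at `0`). -/
noncomputable def t1 {n : ℕ} {lam mu : Fin n → ℂ} (A : GLRep n lam) (B : GLRep n mu)
    (i j : Fin n) : A.V ⊗[ℂ] B.V →ₗ[ℂ] A.V ⊗[ℂ] B.V :=
  TensorProduct.map (A.E i j) LinearMap.id + TensorProduct.map LinearMap.id (B.E i j)

/-- The action of the Yangian generator `t_{ij}^{(2)}` on `L(λ) ⊗ L(μ)`. -/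
noncomputable def t2 {n : ℕ} {lam mu : Fin n → ℂ} (A : GLRep n lam) (B : GLRep n mu)
    (i j : Fin n) : A.V ⊗[ℂ] B.V →ₗ[ℂ] A.V ⊗[ℂ] B.V :=
  ∑ a : Fin n, TensorProduct.map (A.E i a) (B.E a j)

/-- Irreducibility of `L(λ) ⊗ L(μ)` as a module over the Yangian `Y(gl_n)`:
the only subspaces invariant under all the operators `t1` and `t2`
(the generators `t_{ij}^{(r)}` with `r ≥ 3` acting as zero) are `⊥` and `⊤`. -/
def YangianIrred2 {n : ℕ} {lam mu : Fin n → ℂ} (A : GLRep n lam) (B : GLRep n mu) : Prop :=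
  ∀ U : Submodule ℂ (A.V ⊗[ℂ] B.V),
    (∀ i j : Fin n, ∀ v ∈ U, t1 A B i j v ∈ U) →
    (∀ i j : Fin n, ∀ v ∈ U, t2 A B i j v ∈ U) →
    U = ⊥ ∨ U = ⊤

/-- The shifted weight `l_i = λ_i − i + 1` (with `0`-indexed entries:
`l i = lam i - i`). -/
def lshiftC (n : ℕ) (lam : Fin n → ℂ) : Fin n → ℂ :=
  fun i => lam i - ((i : ℕ) : ℂ)

/-- The set `⟨l_j, l_i⟩ = {l_j + t : t ∈ ℤ, 0 ≤ t ≤ l_i − l_j} \ {l_s : i ≤ s ≤ j}`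
for a pair of indices `i < j`. -/
def bracketC (n : ℕ) (l : Fin n → ℂ) (i j : Fin n) : Set ℂ :=
  {x | (∃ t : ℕ, x = l j + (t : ℂ)) ∧ (∃ t : ℕ, l i = x + (t : ℂ)) ∧
    ∀ s : Fin n, i ≤ s → s ≤ j → x ≠ l s}

/-- The condition `m_j, m_i ∉ ⟨l_j, l_i⟩ or l_j, l_i ∉ ⟨m_j, m_i⟩` for a pair
of indices `i < j`. -/
def SepCond (n : ℕ) (lam mu : Fin n → ℂ) (i j : Fin n) : Prop :=
  (lshiftC n mu j ∉ bracketC n (lshiftC n lam) i j ∧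
      lshiftC n mu i ∉ bracketC n (lshiftC n lam) i j) ∨
  (lshiftC n lam j ∉ bracketC n (lshiftC n mu) i j ∧
      lshiftC n lam i ∉ bracketC n (lshiftC n mu) i j)

/-! ### Generalities on linear operators and `sl₂` -/

section Sl2

variable {V : Type} [AddCommGroup V] [Module ℂ V]

lemma comm_pow_aux {X Y Z : Module.End ℂ V} (h : X * Y = Y * X + Z) (hZ : Z * Y = Y * Z) (N : ℕ) :
    X * Y ^ (N + 1) = Y ^ (N + 1) * X + ((N + 1 : ℕ) : ℂ) • (Y ^ N * Z) := by
  have hZc : ∀ m : ℕ, Z * Y ^ m = Y ^ m * Z := fun m => (Commute.pow_right (show Commute Z Y from hZ) m)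
  induction N with
  | zero => simp [h]
  | succ N ih =>
    rw [pow_succ (n := N + 1), ← mul_assoc, ih, add_mul, mul_assoc, h, mul_add, ← mul_assoc,
      smul_mul_assoc, mul_assoc (Y ^ N), hZ, ← mul_assoc (Y ^ N), ← pow_succ, ← pow_succ]
    push_cast
    module

lemma comm_pow_apply {X Y Z : Module.End ℂ V} (h : X * Y = Y * X + Z) (hZ : Z * Y = Y * Z) (N : ℕ)
    (v : V) : X ((Y ^ (N + 1)) v) = (Y ^ (N + 1)) (X v) + ((N + 1 : ℕ) : ℂ) • (Y ^ N) (Z v) := by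
  have := congrArg (fun T : Module.End ℂ V => T v) (comm_pow_aux h hZ N)
  simpa using this

/-- `g` shifts `h`-eigenvalues by `c`. -/
lemma shift_pow {h g : Module.End ℂ V} {c : ℂ} (hg : h * g = g * h + c • g) {a : ℂ} {x : V}
    (hx : h x = a • x) (s : ℕ) : h ((g ^ s) x) = (a + s * c) • (g ^ s) x := by
  cases s with
  | zero => simp [hx]
  | succ s =>
    rw [comm_pow_apply hg (by simp) s x, hx]
    have : (g ^ s) ((c • g) x) = c • (g ^ (s + 1)) x := by
      rw [pow_succ]; simp
    rw [this, map_smul]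
    push_cast
    module

lemma shift_nilp [FiniteDimensional ℂ V] {h g : Module.End ℂ V} {c : ℂ} (hc : c ≠ 0)
    (hg : h * g = g * h + c • g) {a : ℂ} {x : V} (hx : h x = a • x) : ∃ s : ℕ, (g ^ s) x = 0 := by
  by_contra! hcon
  have hfin := Module.End.finite_hasEigenvalue h
  have hinj : Function.Injective (fun s : ℕ => a + s * c) := by
    intro s t hst
    simp only [add_right_inj] at hst
    exact_mod_cast mul_right_cancel₀ hc hst
  refine Set.infinite_of_injective_forall_mem hinj (fun s => ?_) hfin
  exact Module.End.hasEigenvalue_of_hasEigenvector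
    (x := (g ^ s) x) ⟨Module.End.mem_eigenspace_iff.mpr (shift_pow hg hx s), hcon s⟩

lemma exists_last {g : Module.End ℂ V} {x : V} (hx : x ≠ 0) (h : ∃ s : ℕ, (g ^ s) x = 0) :
    ∃ N : ℕ, (g ^ N) x ≠ 0 ∧ (g ^ (N + 1)) x = 0 := by
  classical
  have h0 : Nat.find h ≠ 0 := by
    intro h0
    have := Nat.find_spec h
    rw [h0] at this
    exact hx (by simpa using this)
  obtain ⟨N, hN⟩ := Nat.exists_eq_succ_of_ne_zero h0
  refine ⟨N, Nat.find_min h (by omega), ?_⟩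
  have := Nat.find_spec h
  rwa [hN] at this

lemma pow_zero_of_le {g : Module.End ℂ V} {x : V} {a b : ℕ} (hab : a ≤ b) (h : (g ^ a) x = 0) :
    (g ^ b) x = 0 := by
  obtain ⟨c, rfl⟩ := Nat.exists_eq_add_of_le hab
  rw [add_comm, pow_add]
  simp [h]

lemma sl2_prim [FiniteDimensional ℂ V] {e f h : Module.End ℂ V} (hef : e * f = f * e + h)
    (hhf : h * f = f * h + (-2 : ℂ) • f) {x : V} {d : ℂ} (hx : x ≠ 0) (hex : e x = 0)
    (hhx : h x = d • x) : ∃ N : ℕ, d = N ∧ (f ^ N) x ≠ 0 ∧ (f ^ (N + 1)) x = 0 := by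
  obtain ⟨N, h1, h2⟩ := exists_last hx (shift_nilp (by norm_num) hhf hhx)
  refine ⟨N, ?_, h1, h2⟩
  have key : ∀ s : ℕ, e ((f ^ (s + 1)) x) = (((s : ℂ) + 1) * (d - s)) • (f ^ s) x := by
    intro s
    induction s with
    | zero =>
      have := congrArg (fun T : Module.End ℂ V => T x) hef
      simpa [hex, hhx] using this
    | succ s ih =>
      have := congrArg (fun T : Module.End ℂ V => T ((f ^ (s + 1)) x)) hef
      simp only [Module.End.mul_apply, LinearMap.add_apply] at this
      rw [pow_succ', Module.End.mul_apply, this, ih, shift_pow hhf hhx, map_smul,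
        ← Module.End.mul_apply f, ← pow_succ']
      push_cast
      module
  have h3 := key N
  rw [h2, map_zero] at h3
  rcases smul_eq_zero.mp h3.symm with h4 | h4
  · rcases mul_eq_zero.mp h4 with h5 | h5
    · exact absurd h5 (by exact_mod_cast Nat.succ_ne_zero N)
    · exact sub_eq_zero.mp h5
  · exact absurd h4 h1

lemma sl2_bound [FiniteDimensional ℂ V] {e f h : Module.End ℂ V} (hef : e * f = f * e + h)
    (hhe : h * e = e * h + (2 : ℂ) • e)
    (hhf : h * f = f * h + (-2 : ℂ) • f) {y : V} {c : ℂ} {N : ℕ} (hhy : h y = c • y)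
    (h1 : (e ^ N) y ≠ 0) (h2 : (e ^ (N + 1)) y = 0) : ∃ t : ℕ, c + N = t := by
  have hy : y ≠ 0 := by rintro rfl; simp at h1
  obtain ⟨d, hd, -, -⟩ := sl2_prim hef hhf h1 (by rw [← Module.End.mul_apply, ← pow_succ', h2])
    (shift_pow hhe hhy N)
  by_cases hdN : N ≤ d
  · refine ⟨d - N, ?_⟩
    rw [Nat.cast_sub hdN, ← hd]; ring
  exfalso
  have step : ∀ (p : ℕ) (z : V) (b : ℂ), h z = b • z → (e ^ p) z = 0 → (e ^ (p + 1)) (f z) = 0 := by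
    intro p z b hz hp
    have claim : ∀ p : ℕ, ∃ α : ℂ, (e ^ (p + 1)) (f z) = f ((e ^ (p + 1)) z) + α • (e ^ p) z := by
      intro p
      induction p with
      | zero =>
        refine ⟨b, ?_⟩
        have := congrArg (fun T : Module.End ℂ V => T z) hef
        simpa [hz] using this
      | succ p ih =>
        obtain ⟨α, hα⟩ := ih
        refine ⟨b + (p + 1 : ℕ) * 2 + α, ?_⟩
        have := congrArg (fun T : Module.End ℂ V => T ((e ^ (p + 1)) z)) hef
        simp only [Module.End.mul_apply, LinearMap.add_apply] at this
        rw [pow_succ' e (p + 1), Module.End.mul_apply, hα, map_add, this, shift_pow hhe hz, map_smul,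
          ← Module.End.mul_apply e (e ^ p), ← pow_succ', Module.End.mul_apply]
        module
    obtain ⟨α, hα⟩ := claim p
    rw [hα, hp, pow_zero_of_le (Nat.le_succ p) hp]
    simp
  have steps : ∀ q : ℕ, (e ^ (N + 1 + q)) ((f ^ q) y) = 0 := by
    intro q
    induction q with
    | zero => simpa using h2
    | succ q ih =>
      rw [pow_succ' f, Module.End.mul_apply]
      exact step _ _ _ (shift_pow hhf hhy q) ih
  obtain ⟨q, hq1, hq2⟩ := exists_last hy (shift_nilp (by norm_num) hhf hhy)
  have hfe : f * e = e * f + (-h) := by rw [hef]; abel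
  have hhe' : (-h) * e = e * (-h) + (-2 : ℂ) • e := by
    rw [neg_mul, hhe, mul_neg]; module
  obtain ⟨M, hM, hM1, -⟩ := sl2_prim (d := -(c + q * (-2))) hfe hhe' hq1
    (by rw [← Module.End.mul_apply, ← pow_succ', hq2])
    (by rw [LinearMap.neg_apply, shift_pow hhf hhy q, neg_smul])
  apply hM1
  refine pow_zero_of_le ?_ (steps q)
  have : (M : ℂ) + d = 2 * N + 2 * q := by rw [← hM, ← hd]; ring
  have : M + d = 2 * N + 2 * q := by exact_mod_cast this
  omega

end Sl2

/-! ### Basic facts on `GLRep` -/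

namespace GLRep

variable {n : ℕ} {lam : Fin n → ℂ} (A : GLRep n lam)

lemma E_mul (i j k l : Fin n) : (A.E i j : Module.End ℂ A.V) * A.E k l
    = A.E k l * A.E i j + ((if j = k then A.E i l else 0) - (if l = i then A.E k j else 0)) := by
  rw [← A.commRel i j k l]
  simp only [Module.End.mul_eq_comp]
  abel

lemma E_comm (i j k l : Fin n) (v : A.V) : A.E i j (A.E k l v)
    = A.E k l (A.E i j v) +
      ((if j = k then A.E i l v else 0) - (if l = i then A.E k j v else 0)) := by
  have := congrArg (fun T : Module.End ℂ A.V => T v) (A.E_mul i j k l)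
  simp only [Module.End.mul_apply, LinearMap.add_apply, LinearMap.sub_apply] at this
  rw [this]
  split_ifs <;> simp

lemma E_diag_mul (i a b : Fin n) : (A.E i i : Module.End ℂ A.V) * A.E a b
    = A.E a b * A.E i i + ((if i = a then (1 : ℂ) else 0) - (if b = i then 1 else 0)) • A.E a b := by
  rw [A.E_mul]
  split_ifs with h1 h2 h2
  · subst h1; subst h2; simp
  · subst h1; simp
  · subst h2; simp
  · simp

lemma E_diag_comm (i a b : Fin n) (v : A.V) : A.E i i (A.E a b v)
    = A.E a b (A.E i i v) +
      ((if i = a then (1 : ℂ) else 0) - (if b = i then 1 else 0)) • A.E a b v := by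
  have := congrArg (fun T : Module.End ℂ A.V => T v) (A.E_diag_mul i a b)
  simpa using this

lemma sl2_ef {i j : Fin n} (_h : i ≠ j) :
    (A.E i j : Module.End ℂ A.V) * A.E j i = A.E j i * A.E i j + (A.E i i - A.E j j) := by
  rw [A.E_mul]; simp

lemma sl2_he {i j : Fin n} (h : i ≠ j) :
    (A.E i i - A.E j j : Module.End ℂ A.V) * A.E i j
      = A.E i j * (A.E i i - A.E j j) + (2 : ℂ) • A.E i j := by
  rw [sub_mul, mul_sub, A.E_diag_mul, A.E_diag_mul]
  simp only [h.symm, if_true, if_false]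
  module

lemma sl2_hf {i j : Fin n} (h : i ≠ j) :
    (A.E i i - A.E j j : Module.End ℂ A.V) * A.E j i
      = A.E j i * (A.E i i - A.E j j) + (-2 : ℂ) • A.E j i := by
  rw [sub_mul, mul_sub, A.E_diag_mul, A.E_diag_mul]
  simp only [h, h.symm, if_true, if_false]
  module

/-- `v` is a weight vector of weight `ν`. -/
def IsWt (v : A.V) (ν : Fin n → ℂ) : Prop := ∀ i, A.E i i v = ν i • v

variable {A}

lemma IsWt.pow {v : A.V} {ν : Fin n → ℂ} (hv : A.IsWt v ν) (a b : Fin n) (N : ℕ) :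
    A.IsWt (((A.E a b : Module.End ℂ A.V) ^ N) v)
      (fun i => ν i + N * ((if i = a then (1 : ℂ) else 0) - (if b = i then 1 else 0))) :=
  fun i => shift_pow (A.E_diag_mul i a b) (hv i) N

lemma prim {v : A.V} {ν : Fin n → ℂ} (hv : A.IsWt v ν) (hv0 : v ≠ 0) {i j : Fin n} (hij : i ≠ j)
    (h : A.E i j v = 0) : ∃ N : ℕ, ν i - ν j = N ∧
      ((A.E j i : Module.End ℂ A.V) ^ N) v ≠ 0 ∧ ((A.E j i : Module.End ℂ A.V) ^ (N + 1)) v = 0 :=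
  sl2_prim (A.sl2_ef hij) (A.sl2_hf hij) hv0 h
    (by rw [LinearMap.sub_apply, hv i, hv j, sub_smul])

lemma bound {v : A.V} {ν : Fin n → ℂ} (hv : A.IsWt v ν) {i j : Fin n} (hij : i ≠ j) {N : ℕ}
    (h1 : ((A.E i j : Module.End ℂ A.V) ^ N) v ≠ 0)
    (h2 : ((A.E i j : Module.End ℂ A.V) ^ (N + 1)) v = 0) : ∃ t : ℕ, ν i - ν j + N = t :=
  sl2_bound (A.sl2_ef hij) (A.sl2_he hij) (A.sl2_hf hij)
    (by rw [LinearMap.sub_apply, hv i, hv j, sub_smul]) h1 h2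

lemma exists_last_E {v : A.V} {ν : Fin n → ℂ} (hv : A.IsWt v ν) (hv0 : v ≠ 0) {i j : Fin n}
    (hij : i ≠ j) : ∃ N : ℕ, ((A.E i j : Module.End ℂ A.V) ^ N) v ≠ 0 ∧
      ((A.E i j : Module.End ℂ A.V) ^ (N + 1)) v = 0 := by
  refine exists_last hv0 (shift_nilp (c := 1) one_ne_zero ?_ (hv i))
  rw [A.E_diag_mul]
  simp [hij.symm]

variable (A)

/-- The grading element. -/
noncomputable def H : Module.End ℂ A.V := ∑ i : Fin n, (-((i : ℕ) : ℂ)) • A.E i i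

lemma H_comm (a b : Fin n) (v : A.V) : A.H (A.E a b v)
    = A.E a b (A.H v) + (((b : ℕ) : ℂ) - ((a : ℕ) : ℂ)) • A.E a b v := by
  simp only [H, LinearMap.sum_apply, LinearMap.smul_apply, A.E_diag_comm, map_sum, map_smul,
    smul_add, Finset.sum_add_distrib, smul_smul, ← Finset.sum_smul]
  congr 2
  simp only [mul_sub, mul_ite, mul_one, mul_zero, Finset.sum_sub_distrib]
  simp
  ring

lemma H_eigen (a b : Fin n) {v : A.V} {c : ℂ} (hv : v ∈ Module.End.eigenspace A.H c) :
    A.E a b v ∈ Module.End.eigenspace A.H (c + (((b : ℕ) : ℂ) - ((a : ℕ) : ℂ))) := by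
  rw [Module.End.mem_eigenspace_iff] at hv ⊢
  rw [A.H_comm, hv, map_smul, add_smul]

variable {A}

lemma IsWt.H {v : A.V} {ν : Fin n → ℂ} (hv : A.IsWt v ν) :
    A.H v = (∑ i : Fin n, (-((i : ℕ) : ℂ)) * ν i) • v := by
  simp only [GLRep.H, LinearMap.sum_apply, LinearMap.smul_apply, hv _, smul_smul, Finset.sum_smul]

/-- A highest weight vector generates the module under lowering operators. -/
lemma low_ind {y : A.V} {ν : Fin n → ℂ} (hy : A.IsWt y ν) (hy0 : y ≠ 0)
    (hup : ∀ i j : Fin n, i < j → A.E i j y = 0) (P : Submodule ℂ A.V) (hyP : y ∈ P)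
    (hP : ∀ i j : Fin n, j < i → ∀ v ∈ P, A.E i j v ∈ P) : P = ⊤ := by
  let P0 : Submodule ℂ A.V :=
    sInf {Q | y ∈ Q ∧ ∀ i j : Fin n, j < i → ∀ v ∈ Q, A.E i j v ∈ Q}
  have hy0' : y ∈ P0 := by
    rw [Submodule.mem_sInf]; exact fun Q hQ => hQ.1
  have hlow : ∀ i j : Fin n, j < i → ∀ v ∈ P0, A.E i j v ∈ P0 := by
    intro i j hij v hv
    rw [Submodule.mem_sInf] at hv ⊢
    exact fun Q hQ => hQ.2 i j hij v (hv Q hQ)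
  let Q : Submodule ℂ A.V := P0 ⊓ ⨅ a : Fin n, ⨅ b : Fin n, P0.comap (A.E a b)
  have memQ : ∀ w, w ∈ Q ↔ w ∈ P0 ∧ ∀ a b, A.E a b w ∈ P0 := by
    intro w
    simp [Q, Submodule.mem_iInf]
  have hle : P0 ≤ Q := by
    apply sInf_le
    refine ⟨(memQ _).mpr ⟨hy0', fun a b => ?_⟩, fun i j hij v hv => ?_⟩
    · rcases lt_trichotomy a b with h | h | h
      · rw [hup a b h]; exact zero_mem _
      · subst h; rw [hy a]; exact P0.smul_mem _ hy0'
      · exact hlow a b h _ hy0'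
    · rw [memQ] at hv ⊢
      refine ⟨hv.2 i j, fun a b => ?_⟩
      rw [A.E_comm]
      refine add_mem (hlow i j hij _ (hv.2 a b)) (sub_mem ?_ ?_)
      · split_ifs
        · exact hv.2 _ _
        · exact zero_mem _
      · split_ifs
        · exact hv.2 _ _
        · exact zero_mem _
  have htop : P0 = ⊤ := by
    rcases A.irreducible P0 (fun i j v hv => ((memQ v).mp (hle hv)).2 i j) with h | h
    · rw [h] at hy0'
      exact absurd ((Submodule.mem_bot ℂ).mp hy0') hy0
    · exact h
  rw [eq_top_iff, ← htop]
  exact sInf_le ⟨hyP, hP⟩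

/-- the lower part of the module with respect to the grading -/
noncomputable def lowPart (A : GLRep n lam) (c : ℂ) : Submodule ℂ A.V :=
  ⨆ k : ℕ, Module.End.eigenspace A.H (c - ((k : ℂ) + 1))

lemma lowPart_lower {c : ℂ} {i j : Fin n} (hij : j < i) {v : A.V} (hv : v ∈ A.lowPart c) :
    A.E i j v ∈ A.lowPart c := by
  have : A.lowPart c ≤ (A.lowPart c).comap (A.E i j) := by
    refine iSup_le fun k w hw => ?_
    have h1 := A.H_eigen i j hw
    refine Submodule.mem_iSup_of_mem (k + ((i : ℕ) - (j : ℕ))) ?_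
    convert h1 using 2
    rw [Nat.cast_add, Nat.cast_sub (by exact hij.le)]
    ring
  exact this hv

lemma lowPart_diag {c : ℂ} {i : Fin n} {v : A.V} (hv : v ∈ A.lowPart c) :
    A.E i i v ∈ A.lowPart c := by
  have : A.lowPart c ≤ (A.lowPart c).comap (A.E i i) := by
    refine iSup_le fun k w hw => ?_
    have h1 := A.H_eigen i i hw
    refine Submodule.mem_iSup_of_mem k ?_
    convert h1 using 2
    ring
  exact this hv

lemma lower_mem_lowPart {c : ℂ} {y : A.V} (hy : A.H y = c • y) {i j : Fin n} (hij : j < i) :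
    A.E i j y ∈ A.lowPart c := by
  have h1 := A.H_eigen i j (Module.End.mem_eigenspace_iff.mpr hy)
  refine Submodule.mem_iSup_of_mem ((i : ℕ) - (j : ℕ) - 1) ?_
  convert h1 using 2
  have : ((i : ℕ) - (j : ℕ) - 1) + 1 + (j : ℕ) = (i : ℕ) := by
    have : (j : ℕ) < i := hij
    omega
  have h2 : (((i : ℕ) - (j : ℕ) - 1 : ℕ) : ℂ) + 1 + (j : ℕ) = ((i : ℕ) : ℂ) := by
    exact_mod_cast this
  rw [← h2]; ring

lemma decomp {y : A.V} {ν : Fin n → ℂ} (hy : A.IsWt y ν) (hy0 : y ≠ 0)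
    (hup : ∀ i j : Fin n, i < j → A.E i j y = 0) {c : ℂ} (hc : A.H y = c • y) :
    (ℂ ∙ y) ⊔ A.lowPart c = ⊤ := by
  apply low_ind hy hy0 hup
  · exact Submodule.mem_sup_left (Submodule.mem_span_singleton_self y)
  · intro i j hij v hv
    obtain ⟨a, ha, b, hb, rfl⟩ := Submodule.mem_sup.mp hv
    obtain ⟨t, rfl⟩ := Submodule.mem_span_singleton.mp ha
    rw [map_add, map_smul]
    exact Submodule.mem_sup_right (add_mem (Submodule.smul_mem _ _ (lower_mem_lowPart hc hij))
      (lowPart_lower hij hb))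

lemma lowPart_le (A : GLRep n lam) (c : ℂ) :
    A.lowPart c ≤ ⨆ d : ℂ, ⨆ _ : d ≠ c, Module.End.eigenspace A.H d := by
  refine iSup_le fun k => le_iSup₂_of_le (c - ((k : ℂ) + 1)) ?_ le_rfl
  intro h
  have h2 : (k : ℂ) + 1 = 0 := by linear_combination -h
  exact absurd h2 (by exact_mod_cast Nat.succ_ne_zero k)

lemma lowPart_disj (A : GLRep n lam) (c : ℂ) :
    Disjoint (Module.End.eigenspace A.H c) (A.lowPart c) :=
  (A.H.eigenspaces_iSupIndep c).mono_right (lowPart_le A c)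

lemma eig_cases {y : A.V} {ν : Fin n → ℂ} (hy : A.IsWt y ν) (hy0 : y ≠ 0)
    (hup : ∀ i j : Fin n, i < j → A.E i j y = 0) {c : ℂ} (hc : A.H y = c • y)
    {z : A.V} {d : ℂ} (hz : A.H z = d • z) (hz0 : z ≠ 0) :
    (z ∈ (ℂ ∙ y) ∧ d = c) ∨ ∃ k : ℕ, d = c - (k + 1) := by
  by_cases hk : ∃ k : ℕ, d = c - (k + 1)
  · exact Or.inr hk
  left
  push Not at hk
  have hzt : z ∈ (ℂ ∙ y) ⊔ A.lowPart c := by rw [decomp hy hy0 hup hc]; trivial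
  have hzd : z ∈ Module.End.eigenspace A.H d := Module.End.mem_eigenspace_iff.mpr hz
  by_cases hdc : d = c
  · subst hdc
    refine ⟨?_, rfl⟩
    obtain ⟨a, ha, b, hb, rfl⟩ := Submodule.mem_sup.mp hzt
    obtain ⟨t, rfl⟩ := Submodule.mem_span_singleton.mp ha
    have hb' : b ∈ Module.End.eigenspace A.H d := by
      rw [Module.End.mem_eigenspace_iff]
      rw [map_add, map_smul, hc, smul_add, smul_comm] at hz
      exact add_left_cancel hz
    have : b = 0 := (Submodule.disjoint_def.mp (lowPart_disj A d)) b hb' hb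
    rw [this, add_zero]
    exact ha
  · exfalso
    have hle : (ℂ ∙ y) ⊔ A.lowPart c ≤ ⨆ e : ℂ, ⨆ _ : e ≠ d, Module.End.eigenspace A.H e := by
      refine sup_le ?_ (iSup_le fun k => le_iSup₂_of_le (c - ((k : ℂ) + 1)) (hk k).symm le_rfl)
      refine le_iSup₂_of_le c (Ne.symm hdc) ?_
      rw [Submodule.span_singleton_le_iff_mem]
      exact Module.End.mem_eigenspace_iff.mpr hc
    exact hz0 (Submodule.disjoint_def.mp (A.H.eigenspaces_iSupIndep d) z hzd (hle hzt))

lemma iSup_eig (A : GLRep n lam) (i : Fin n) :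
    ⨆ c : ℂ, Module.End.eigenspace (A.E i i : Module.End ℂ A.V) c = ⊤ := by
  have hmem : A.hv ∈ ⨆ c : ℂ, Module.End.eigenspace (A.E i i : Module.End ℂ A.V) c :=
    Submodule.mem_iSup_of_mem (lam i) (Module.End.mem_eigenspace_iff.mpr (A.hv_diag i))
  rcases A.irreducible (⨆ c : ℂ, Module.End.eigenspace (A.E i i : Module.End ℂ A.V) c) (by
    intro a b
    change (⨆ c : ℂ, Module.End.eigenspace (A.E i i : Module.End ℂ A.V) c) ≤
      (⨆ c : ℂ, Module.End.eigenspace (A.E i i : Module.End ℂ A.V) c).comap (A.E a b)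
    refine iSup_le fun c w hw => ?_
    rw [Module.End.mem_eigenspace_iff] at hw
    refine Submodule.mem_iSup_of_mem
      (c + ((if i = a then (1 : ℂ) else 0) - (if b = i then 1 else 0))) ?_
    rw [Module.End.mem_eigenspace_iff, A.E_diag_comm, hw, map_smul, add_smul]) with h | h
  · rw [h] at hmem
    exact absurd ((Submodule.mem_bot ℂ).mp hmem) A.hv_ne
  · exact h

/-- A subspace stable under the diagonal operators, not contained in `K`, contains a weight vector
outside `K`. -/
lemma exists_wt (A : GLRep n lam) (M K : Submodule ℂ A.V)
    (hM : ∀ i, ∀ v ∈ M, A.E i i v ∈ M) (hMK : ¬ M ≤ K) :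
    ∃ v ∈ M, v ∉ K ∧ ∃ ν, A.IsWt v ν := by
  have key : ∀ S : Finset (Fin n), ∃ ν : Fin n → ℂ,
      ¬ (M ⊓ ⨅ i ∈ S, Module.End.eigenspace (A.E i i : Module.End ℂ A.V) (ν i)) ≤ K := by
    intro S
    induction S using Finset.induction_on with
    | empty => exact ⟨0, by simpa using hMK⟩
    | insert i S hi ih =>
      obtain ⟨ν, hν⟩ := ih
      set N := M ⊓ ⨅ i ∈ S, Module.End.eigenspace (A.E i i : Module.End ℂ A.V) (ν i) with hN
      have hst : ∀ x ∈ N, (A.E i i : Module.End ℂ A.V) x ∈ N := by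
        intro x hx
        rw [hN, Submodule.mem_inf] at hx ⊢
        refine ⟨hM i x hx.1, ?_⟩
        have h2 := hx.2
        simp only [Submodule.mem_iInf, Module.End.mem_eigenspace_iff] at h2 ⊢
        intro j hj
        rw [A.E_diag_comm, h2 j hj, map_smul]
        by_cases hji : j = i
        · subst hji; simp
        · simp [hji, Ne.symm hji]
      have hsup := Submodule.eq_iSup_inf_genEigenspace 1 hst (A.iSup_eig i)
      have : ∃ c : ℂ, ¬ (N ⊓ Module.End.eigenspace (A.E i i : Module.End ℂ A.V) c) ≤ K := by
        by_contra! hcon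
        apply hν
        rw [hsup]
        exact iSup_le hcon
      obtain ⟨c, hc⟩ := this
      refine ⟨Function.update ν i c, fun hle => hc (le_trans ?_ hle)⟩
      intro x hx
      rw [Submodule.mem_inf, hN, Submodule.mem_inf] at hx
      rw [Submodule.mem_inf]
      refine ⟨hx.1.1, ?_⟩
      have h2 := hx.1.2
      simp only [Submodule.mem_iInf] at h2 ⊢
      intro j hj
      rcases Finset.mem_insert.mp hj with rfl | hj'
      · simpa using hx.2
      · have hji : j ≠ i := fun h => hi (h ▸ hj')
        rw [Function.update_of_ne hji]
        exact h2 j hj'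
  obtain ⟨ν, hν⟩ := key Finset.univ
  obtain ⟨v, hv, hvK⟩ := SetLike.not_le_iff_exists.mp hν
  rw [Submodule.mem_inf] at hv
  refine ⟨v, hv.1, hvK, ν, fun i => ?_⟩
  have h2 := hv.2
  simp only [Submodule.mem_iInf, Module.End.mem_eigenspace_iff] at h2
  exact h2 i (Finset.mem_univ i)

lemma hv_wt (A : GLRep n lam) : A.IsWt A.hv lam := A.hv_diag

lemma highest_wt_unique {y : A.V} {ν : Fin n → ℂ} (hy : A.IsWt y ν) (hy0 : y ≠ 0)
    (hup : ∀ i j : Fin n, i < j → A.E i j y = 0) : y ∈ (ℂ ∙ A.hv) := by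
  rcases eig_cases A.hv_wt A.hv_ne A.hv_upper A.hv_wt.H hy.H hy0 with h | ⟨k, hk⟩
  · exact h.1
  rcases eig_cases hy hy0 hup hy.H A.hv_wt.H A.hv_ne with h | ⟨k', hk'⟩
  · exfalso
    rw [← h.2] at hk
    have h2 : (k : ℂ) + 1 = 0 := by linear_combination hk
    exact absurd h2 (by exact_mod_cast Nat.succ_ne_zero k)
  · exfalso
    have h2 : (k : ℂ) + 1 + (k' + 1) = 0 := by linear_combination hk + hk'
    exact absurd h2 (by exact_mod_cast (by omega : k + 1 + (k' + 1) ≠ 0))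

lemma highest_unique {y : A.V}
    (hup : ∀ i j : Fin n, i < j → A.E i j y = 0) : y ∈ (ℂ ∙ A.hv) := by
  let M : Submodule ℂ A.V := ⨅ i : Fin n, ⨅ j : Fin n, ⨅ _ : i < j, LinearMap.ker (A.E i j)
  have memM : ∀ w, w ∈ M ↔ ∀ i j : Fin n, i < j → A.E i j w = 0 := by
    intro w
    simp [M, Submodule.mem_iInf]
  by_contra hcon
  obtain ⟨v, hvM, hvK, ν, hν⟩ := A.exists_wt M (ℂ ∙ A.hv) (by
    intro a v hv
    rw [memM] at hv ⊢
    intro i j hij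
    have := A.E_diag_comm a i j v
    rw [hv i j hij] at this
    have h2 : A.E i j (A.E a a v) = 0 := by simpa using this.symm
    exact h2) (fun hle => hcon (hle ((memM y).mpr hup)))
  apply hvK
  refine highest_wt_unique hν ?_ ((memM v).mp hvM)
  rintro rfl
  exact hvK (zero_mem _)

end GLRep

/-! ### Vectors satisfying the characteristic-type relations -/

namespace GLRep

variable {n : ℕ} {lam : Fin n → ℂ} {A : GLRep n lam}

/-- The level `j` relation. -/
def Lev (A : GLRep n lam) (c : ℂ) (j : Fin n) (v : A.V) : Prop :=
  ∀ i : Fin n, i < j → ∑ a ∈ Finset.Iio j, A.E i a (A.E a j v) = c • A.E i j v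

/-- `v` is annihilated by raising operators of `gl_k`. -/
def High (A : GLRep n lam) (k : ℕ) (v : A.V) : Prop :=
  ∀ i j : Fin n, i < j → (j : ℕ) < k → A.E i j v = 0

lemma Lev.stable {c : ℂ} {j : Fin n} {v : A.V} (h : A.Lev c j v) {a b : Fin n} (ha : a < j)
    (hb : b < j) : A.Lev c j (A.E a b v) := by
  intro i hi
  have h1 : ∀ d ∈ Finset.Iio j, A.E i d (A.E d j (A.E a b v)) =
      A.E a b (A.E i d (A.E d j v)) + ((if d = a then A.E i b (A.E a j v) else 0)
        - (if b = i then A.E a d (A.E d j v) else 0) - (if b = d then A.E i b (A.E a j v) else 0)) := by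
    intro d _
    rw [A.E_comm d j a b v, if_neg ha.ne', zero_sub, map_add, A.E_comm i d a b]
    by_cases hbd : b = d
    · subst hbd
      by_cases hba : b = a
      · subst hba
        simp
        abel
      · simp [hba]
        abel
    · by_cases hda : d = a
      · subst hda
        simp [hbd]
      · simp [hbd, hda]
  rw [Finset.sum_congr rfl h1, Finset.sum_add_distrib, Finset.sum_sub_distrib,
    Finset.sum_sub_distrib, ← map_sum, h i hi, Finset.sum_ite_eq', Finset.sum_ite_eq,
    if_pos (Finset.mem_Iio.mpr ha), if_pos (Finset.mem_Iio.mpr hb), A.E_comm i j a b v,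
    if_neg ha.ne', map_smul]
  by_cases hbi : b = i
  · subst hbi
    simp only [if_true]
    rw [h a ha]
    module
  · simp [hbi]

lemma Lev.stable_pow {c : ℂ} {j : Fin n} {v : A.V} (h : A.Lev c j v) {a b : Fin n} (ha : a < j)
    (hb : b < j) (N : ℕ) : A.Lev c j (((A.E a b : Module.End ℂ A.V) ^ N) v) := by
  induction N with
  | zero => simpa using h
  | succ N ih =>
    rw [pow_succ', Module.End.mul_apply]
    exact ih.stable ha hb

lemma Lev.diag {c : ℂ} {j : Fin n} {v : A.V} (h : A.Lev c j v) (b : Fin n) :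
    A.Lev c j (A.E b b v) := by
  intro i hi
  have comm' : ∀ p q : Fin n, ∀ w : A.V, A.E p q (A.E b b w) = A.E b b (A.E p q w)
      - ((if b = p then (1 : ℂ) else 0) - (if q = b then 1 else 0)) • A.E p q w := by
    intro p q w
    rw [A.E_diag_comm]; abel
  have h1 : ∀ d ∈ Finset.Iio j, A.E i d (A.E d j (A.E b b v)) =
      A.E b b (A.E i d (A.E d j v)) -
        ((if b = i then (1 : ℂ) else 0) - (if j = b then 1 else 0)) • A.E i d (A.E d j v) := by
    intro d _
    rw [comm' d j v, map_sub, map_smul, comm' i d]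
    have : (if d = b then (1 : ℂ) else 0) = if b = d then 1 else 0 := by simp [eq_comm]
    rw [this]
    module
  rw [Finset.sum_congr rfl h1, Finset.sum_sub_distrib, ← map_sum, ← Finset.smul_sum, h i hi,
    comm' i j v, map_smul]
  module

/-- strict decrease of the shifted weight -/
lemma High.diff {k : ℕ} {v : A.V} (hH : A.High k v) {ν : Fin n → ℂ} (hν : A.IsWt v ν) (hv0 : v ≠ 0)
    {i j : Fin n} (hij : i < j) (hj : (j : ℕ) < k) :
    ∃ t : ℕ, 0 < t ∧ lshiftC n ν i = lshiftC n ν j + t := by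
  obtain ⟨N, hN, -, -⟩ := prim hν hv0 hij.ne (hH i j hij hj)
  have h1 : (i : ℕ) < j := hij
  refine ⟨N + ((j : ℕ) - (i : ℕ)), by omega, ?_⟩
  simp only [lshiftC]
  rw [Nat.cast_add, ← hN, Nat.cast_sub h1.le]
  ring

lemma lev_formula {c : ℂ} {j : Fin n} {v : A.V} (h : A.Lev c j v) (hH : A.High j v)
    {ν : Fin n → ℂ} (hν : A.IsWt v ν) {i : Fin n} (hi : i < j) :
    (lshiftC n ν i - (c - (j : ℕ))) • A.E i j v
      = - ∑ a ∈ Finset.Iio i, A.E i a (A.E a j v) := by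
  have hsplit : Finset.Iio j = Finset.Iio i ∪ ({i} ∪ Finset.Ioo i j) := by
    ext a
    simp only [Finset.mem_Iio, Finset.mem_union, Finset.mem_singleton, Finset.mem_Ioo]
    constructor
    · intro ha
      rcases lt_trichotomy a i with h | h | h
      · exact Or.inl h
      · exact Or.inr (Or.inl h)
      · exact Or.inr (Or.inr ⟨h, ha⟩)
    · rintro (h | h | h)
      · exact h.trans hi
      · exact h ▸ hi
      · exact h.2
  have h1 := h i hi
  rw [hsplit, Finset.sum_union, Finset.sum_union, Finset.sum_singleton] at h1
  · have h2 : ∀ a ∈ Finset.Ioo i j, A.E i a (A.E a j v) = A.E i j v := by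
      intro a ha
      rw [Finset.mem_Ioo] at ha
      rw [A.E_comm, hH i a ha.1 ha.2, if_neg hi.ne']
      simp
    rw [Finset.sum_congr rfl h2, Finset.sum_const, Fin.card_Ioo, A.E_diag_comm, hν i,
      if_neg hi.ne', if_pos rfl, map_smul] at h1
    have h3 : (i : ℕ) < j := hi
    have h4 : (((j : ℕ) - (i : ℕ) - 1 : ℕ) : ℂ) = (j : ℕ) - (i : ℕ) - 1 := by
      rw [Nat.cast_sub (by omega), Nat.cast_sub h3.le]; simp
    rw [← Nat.cast_smul_eq_nsmul ℂ, h4] at h1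
    have h5 : ∑ a ∈ Finset.Iio i, A.E i a (A.E a j v) = c • A.E i j v - (ν i • A.E i j v
      + ((1 : ℂ) - 0) • A.E i j v + (((j : ℕ) : ℂ) - (i : ℕ) - 1) • A.E i j v) := by
      rw [← h1]; abel
    rw [h5]
    simp only [lshiftC]
    module
  · rw [Finset.disjoint_singleton_left]; simp
  · rw [Finset.disjoint_left]
    intro a ha
    simp only [Finset.mem_Iio] at ha
    simp only [Finset.mem_union, Finset.mem_singleton, Finset.mem_Ioo, not_or, not_and]
    exact ⟨ha.ne, fun h => absurd h (not_lt.mpr ha.le)⟩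

/-- The raising step. -/
lemma step {c : ℂ} {j : Fin n} {v : A.V} (hv0 : v ≠ 0) (h : A.Lev c j v) (hH : A.High j v)
    {ν : Fin n → ℂ} (hν : A.IsWt v ν) :
    A.High ((j : ℕ) + 1) v ∨ ∃ r : Fin n, r < j ∧ ∃ N : ℕ, 0 < N ∧
      lshiftC n ν r = c - (j : ℕ) ∧
      ((A.E r j : Module.End ℂ A.V) ^ N) v ≠ 0 ∧
      ((A.E r j : Module.End ℂ A.V) ^ (N + 1)) v = 0 ∧
      A.High ((j : ℕ) + 1) (((A.E r j : Module.End ℂ A.V) ^ N) v) := by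
  classical
  by_cases hall : ∀ i : Fin n, i < j → A.E i j v = 0
  · left
    intro i k hik hk
    rcases Nat.lt_succ_iff_lt_or_eq.mp hk with h1 | h1
    · exact hH i k hik h1
    · have : k = j := Fin.ext h1
      subst this
      exact hall i hik
  right
  push Not at hall
  obtain ⟨r, ⟨hrj, hr0⟩, hrmin⟩ : ∃ r : Fin n, (r < j ∧ A.E r j v ≠ 0) ∧
      ∀ a : Fin n, a < r → A.E a j v = 0 := by
    let S : Finset (Fin n) := Finset.univ.filter (fun r => r < j ∧ A.E r j v ≠ 0)
    have hS : S.Nonempty := by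
      obtain ⟨i, hi, hi0⟩ := hall
      exact ⟨i, by simp [S, hi, hi0]⟩
    refine ⟨S.min' hS, ?_, fun a ha => ?_⟩
    · have := S.min'_mem hS
      simpa [S] using this
    · by_contra hcon
      have hlt : S.min' hS < j := by
        have := S.min'_mem hS
        simp only [S, Finset.mem_filter] at this
        exact this.2.1
      have : a ∈ S := by simp [S, hcon, ha.trans hlt]
      exact absurd (S.min'_le a this) (not_le.mpr ha)
  obtain ⟨N, hN1, hN2⟩ := exists_last_E hν hv0 hrj.ne
  have hNpos : 0 < N := by
    rcases Nat.eq_zero_or_pos N with h0 | h0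
    · subst h0
      simp at hN2
      exact absurd hN2 hr0
    · exact h0
  have hnr : lshiftC n ν r = c - (j : ℕ) := by
    have h1 := lev_formula h hH hν hrj
    rw [Finset.sum_eq_zero (fun a ha => by rw [hrmin a (Finset.mem_Iio.mp ha), map_zero]),
      neg_zero] at h1
    rcases smul_eq_zero.mp h1 with h2 | h2
    · exact sub_eq_zero.mp h2
    · exact absurd h2 hr0
  refine ⟨r, hrj, N, hNpos, hnr, hN1, hN2, ?_⟩
  obtain ⟨M, rfl⟩ : ∃ M, N = M + 1 := ⟨N - 1, by omega⟩
  set Y : Module.End ℂ A.V := A.E r j with hY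
  have hcomm : ∀ i : Fin n, i < j → (A.E i j : Module.End ℂ A.V) * Y = Y * A.E i j := by
    intro i hi
    rw [hY, A.E_mul, if_neg hrj.ne', if_neg hi.ne']
    simp
  have hcomm' : ∀ i : Fin n, i < j → ∀ w : A.V, ∀ K : ℕ, A.E i j ((Y ^ K) w) = (Y ^ K) (A.E i j w) := by
    intro i hi w K
    have := congrArg (fun T : Module.End ℂ A.V => T w)
      (Commute.pow_right (show Commute (A.E i j : Module.End ℂ A.V) Y from hcomm i hi) K).eq
    simpa using this
  -- annihilation by the last column
  have hlast : ∀ i : Fin n, i < j → A.E i j ((Y ^ (M + 1)) v) = 0 := by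
    intro i
    induction i using WellFoundedLT.induction with
    | ind i ih =>
    intro hi
    rcases lt_trichotomy i r with hir | hir | hir
    · rw [hcomm' i hi, hrmin i hir, map_zero]
    · subst hir
      rw [← hN2, pow_succ' Y (M + 1), Module.End.mul_apply]
    · have h1 := congrArg (fun w => (Y ^ (M + 1)) w) (lev_formula h hH hν hi)
      simp only [map_smul, map_neg, map_sum] at h1
      have h2 : ∀ a ∈ Finset.Iio i, (Y ^ (M + 1)) (A.E i a (A.E a j v)) =
          if a = r then - (((M + 1 : ℕ) : ℂ) • A.E i j ((Y ^ (M + 1)) v)) else 0 := by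
        intro a ha
        rw [Finset.mem_Iio] at ha
        by_cases har : a = r
        · subst har
          rw [if_pos rfl]
          have hc1 : (A.E i a : Module.End ℂ A.V) * Y = Y * A.E i a + A.E i j := by
            rw [hY, A.E_mul, if_pos rfl, if_neg hi.ne', sub_zero]
          have h3 := comm_pow_apply hc1 (hcomm i hi) M (A.E a j v)
          have h4 : (Y ^ (M + 1)) (A.E a j v) = 0 := by
            rw [← hN2, pow_succ Y (M + 1), Module.End.mul_apply]
          have h5 : (Y ^ M) (A.E i j (A.E a j v)) = A.E i j ((Y ^ (M + 1)) v) := by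
            rw [pow_succ Y M, Module.End.mul_apply, hcomm' i hi]
          rw [h4, map_zero, h5] at h3
          exact eq_neg_of_add_eq_zero_left h3.symm
        · rw [if_neg har]
          have hc1 : Commute (A.E i a : Module.End ℂ A.V) Y := by
            change (A.E i a : Module.End ℂ A.V) * Y = Y * A.E i a
            rw [hY, A.E_mul, if_neg har, if_neg hi.ne']
            simp
          have h3 := congrArg (fun T : Module.End ℂ A.V => T (A.E a j v)) (hc1.pow_right (M + 1)).eq
          simp only [Module.End.mul_apply] at h3
          rw [← h3, ← hcomm' a (ha.trans hi), ih a ha (ha.trans hi), map_zero]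
      rw [Finset.sum_congr rfl h2, Finset.sum_ite_eq', if_pos (Finset.mem_Iio.mpr hir), neg_neg,
        ← hcomm' i hi, ← sub_eq_zero, ← sub_smul] at h1
      rcases smul_eq_zero.mp h1 with h3 | h3
      · exfalso
        obtain ⟨t, ht, hrt⟩ := hH.diff hν hv0 hir hi
        rw [← hnr, hrt] at h3
        have h4 : (t : ℂ) + ((M + 1 : ℕ) : ℂ) = 0 := by linear_combination -h3
        exact absurd h4 (by exact_mod_cast (by omega : t + (M + 1) ≠ 0))
      · exact h3
  intro i k hik hk
  rcases Nat.lt_succ_iff_lt_or_eq.mp hk with h1 | h1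
  · have hkj : k < j := h1
    by_cases hkr : k = r
    · subst hkr
      have hc1 : (A.E i k : Module.End ℂ A.V) * Y = Y * A.E i k + A.E i j := by
        rw [hY, A.E_mul, if_pos rfl, if_neg (hik.trans hkj).ne', sub_zero]
      rw [comm_pow_apply hc1 (hcomm i (hik.trans hkj)) M v, hH i k hik h1, hrmin i hik]
      simp
    · have hc1 : Commute (A.E i k : Module.End ℂ A.V) Y := by
        change (A.E i k : Module.End ℂ A.V) * Y = Y * A.E i k
        rw [hY, A.E_mul, if_neg hkr, if_neg (hik.trans hkj).ne']
        simp
      have h3 := congrArg (fun T : Module.End ℂ A.V => T v) (hc1.pow_right (M + 1)).eq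
      simp only [Module.End.mul_apply] at h3
      rw [h3, hH i k hik h1, map_zero]
  · have : k = j := Fin.ext h1
    subst this
    exact hlast i hik

/-- Combinatorial information extracted from the raising process. -/
lemma chain (mu : Fin n → ℂ) : ∀ (d k : ℕ), k + d = n → ∀ (v : A.V) (ν : Fin n → ℂ), v ≠ 0 →
    A.IsWt v ν → A.High k v → (∀ j : Fin n, k ≤ (j : ℕ) → A.Lev (mu j) j v) →
    (∀ i : Fin n, (i : ℕ) < k → (∀ J : Fin n, k ≤ (J : ℕ) → lshiftC n ν i ≠ lshiftC n mu J) →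
      lshiftC n ν i = lshiftC n lam i) ∧
    ((∀ i : Fin n, (i : ℕ) < k → lshiftC n ν i = lshiftC n lam i) ∨
      ∃ J : Fin n, k ≤ (J : ℕ) ∧ (∃ t : ℕ, lshiftC n mu J = lshiftC n lam J + t) ∧
        ∀ s : Fin n, s ≤ J → lshiftC n mu J ≠ lshiftC n lam s) := by
  intro d
  induction d with
  | zero =>
    intro k hk v ν hv0 hν hH _
    have hall : ∀ i : Fin n, lshiftC n ν i = lshiftC n lam i := by
      have hmem := highest_wt_unique hν hv0 (fun i j hij => hH i j hij (by have := j.2; omega))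
      obtain ⟨t, rfl⟩ := Submodule.mem_span_singleton.mp hmem
      intro i
      have h1 := hν i
      rw [map_smul, A.hv_diag, smul_comm, ← sub_eq_zero, ← sub_smul] at h1
      rcases smul_eq_zero.mp h1 with h2 | h2
      · simp only [lshiftC]
        linear_combination -h2
      · exact absurd h2 hv0
    exact ⟨fun i _ _ => hall i, Or.inl fun i _ => hall i⟩
  | succ d ih =>
    intro k hk v ν hv0 hν hH hLev
    let j : Fin n := ⟨k, by omega⟩
    rcases step hv0 (hLev j le_rfl) hH hν with hno | ⟨r, hrj, N, hN, hnr, h1, h2, hH'⟩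
    · obtain ⟨c1, c2⟩ := ih (k + 1) (by omega) v ν hv0 hν hno (fun j hj => hLev j (by omega))
      refine ⟨fun i hi hJ => c1 i (by omega) (fun J hJ' => hJ J (by omega)), ?_⟩
      rcases c2 with c2 | ⟨J, hJ, c2⟩
      · exact Or.inl fun i hi => c2 i (by omega)
      · exact Or.inr ⟨J, by omega, c2⟩
    · have hν' := hν.pow r j N
      obtain ⟨c1, c2⟩ := ih (k + 1) (by omega) _ _ h1 hν' hH'
        (fun j' hj' => (hLev j' (by omega)).stable_pow
          (lt_trans hrj (show k < (j' : ℕ) by omega)) (show k < (j' : ℕ) by omega) N)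
      have hrk : (r : ℕ) < k := hrj
      have hmj : lshiftC n mu j = lshiftC n ν r := hnr.symm
      have hne : ∀ i : Fin n, (i : ℕ) < k → i ≠ r →
          lshiftC n (fun i => ν i + N * ((if i = r then (1 : ℂ) else 0) - (if j = i then 1 else 0))) i
            = lshiftC n ν i := by
        intro i hi hir
        have : j ≠ i := by rintro rfl; exact absurd hi (lt_irrefl _)
        simp [lshiftC, hir, this]
      refine ⟨fun i hi hJ => ?_, ?_⟩
      · have hir : i ≠ r := by
          rintro rfl
          exact hJ j le_rfl hmj.symm
        have := c1 i (by omega) (fun J hJ' => by rw [hne i hi hir]; exact hJ J (by omega))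
        rwa [hne i hi hir] at this
      · rcases c2 with c2 | ⟨J, hJ, c2⟩
        · right
          obtain ⟨t, ht⟩ := bound hν hrj.ne h1 h2
          have hlj := c2 j (Nat.lt_succ_self k)
          have hjr : j ≠ r := hrj.ne'
          have hmjl : lshiftC n mu j = lshiftC n lam j + ((t + (k - (r : ℕ)) : ℕ) : ℂ) := by
            rw [hmj, ← hlj]
            simp only [lshiftC, hjr, if_true, if_false]
            rw [Nat.cast_add, Nat.cast_sub hrk.le, ← ht]
            simp only [j]
            ring
          refine ⟨j, le_rfl, ⟨_, hmjl⟩, fun s hs => ?_⟩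
          rcases hs.lt_or_eq with hs | rfl
          · have hsk : (s : ℕ) < k := hs
            rw [← c2 s (by omega)]
            by_cases hsr : s = r
            · subst hsr
              rw [hmj]
              intro hcon
              simp only [lshiftC, hjr, if_true, if_false] at hcon
              have h3 : (N : ℂ) = 0 := by linear_combination -hcon
              exact absurd h3 (by exact_mod_cast hN.ne')
            · rw [hne s hsk hsr, hmj]
              rcases lt_or_gt_of_ne hsr with h3 | h3
              · obtain ⟨t, ht, h4⟩ := hH.diff hν hv0 h3 hrk
                rw [h4]
                intro hcon
                have : (t : ℂ) = 0 := by linear_combination -hcon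
                exact absurd this (by exact_mod_cast ht.ne')
              · obtain ⟨t, ht, h4⟩ := hH.diff hν hv0 h3 hsk
                rw [h4]
                intro hcon
                have : (t : ℂ) = 0 := by linear_combination hcon
                exact absurd this (by exact_mod_cast ht.ne')
          · rw [hmjl]
            intro hcon
            have h3 : ((t + (k - (r : ℕ)) : ℕ) : ℂ) = 0 := by linear_combination hcon
            exact absurd h3 (by exact_mod_cast (by omega : t + (k - (r : ℕ)) ≠ 0))
        · exact Or.inr ⟨J, by omega, c2⟩

end GLRep

/-! ### The single-module statement -/

lemma heis_zero {V : Type} [AddCommGroup V] [Module ℂ V] {X Y Z : Module.End ℂ V}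
    (h : X * Y = Y * X + Z) (hZ : Z * Y = Y * Z) (hX : X * Z = Z * X) :
    ∀ (N : ℕ) (v : V), X v = 0 → (Y ^ N) v = 0 → (Z ^ N) v = 0 := by
  intro N
  induction N with
  | zero => intro v _ h0; simpa using h0
  | succ N ih =>
    intro v hv h0
    have h1 := comm_pow_apply h hZ N v
    rw [h0, hv, map_zero, map_zero, zero_add] at h1
    have h2 : (Y ^ N) (Z v) = 0 := by
      rcases smul_eq_zero.mp h1.symm with h3 | h3
      · exact absurd h3 (by exact_mod_cast Nat.succ_ne_zero N)
      · exact h3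
    rw [pow_succ, Module.End.mul_apply]
    refine ih _ ?_ h2
    have := congrArg (fun T : Module.End ℂ V => T v) hX
    simp only [Module.End.mul_apply] at this
    rw [this, hv, map_zero]

lemma IsGLHighestWeight.diff {n : ℕ} {mu : Fin n → ℂ} (hmu : IsGLHighestWeight n mu) :
    ∀ (d : ℕ) (i j : Fin n), (i : ℕ) + d = j → ∃ t : ℕ, d ≤ t ∧ lshiftC n mu i = lshiftC n mu j + t := by
  intro d
  induction d with
  | zero =>
    intro i j hij
    have : i = j := Fin.ext (by simpa using hij)
    subst this
    exact ⟨0, le_rfl, by simp⟩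
  | succ d ih =>
    intro i j hij
    have hi : (i : ℕ) + 1 < n := by have := j.2; omega
    obtain ⟨N, hN⟩ := hmu i hi
    obtain ⟨t, ht, h1⟩ := ih ⟨(i : ℕ) + 1, hi⟩ j (by simp; omega)
    refine ⟨t + N + 1, by omega, ?_⟩
    simp only [lshiftC] at h1 ⊢
    push_cast at h1 ⊢
    linear_combination h1 + hN

lemma IsGLHighestWeight.diff_le {n : ℕ} {mu : Fin n → ℂ} (hmu : IsGLHighestWeight n mu)
    {i j : Fin n} (hij : i ≤ j) : ∃ t : ℕ, lshiftC n mu i = lshiftC n mu j + t := by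
  have : (i : ℕ) ≤ j := hij
  obtain ⟨t, -, h⟩ := hmu.diff ((j : ℕ) - i) i j (by omega)
  exact ⟨t, h⟩

lemma IsGLHighestWeight.diff_lt {n : ℕ} {mu : Fin n → ℂ} (hmu : IsGLHighestWeight n mu)
    {i j : Fin n} (hij : i < j) : ∃ t : ℕ, 0 < t ∧ lshiftC n mu i = lshiftC n mu j + t := by
  have : (i : ℕ) < j := hij
  obtain ⟨t, h0, h⟩ := hmu.diff ((j : ℕ) - i) i j (by omega)
  exact ⟨t, by omega, h⟩

lemma nat_ne_aux {x y : ℂ} (a : ℕ) (ha : 0 < a) (h : x = y + a) : x ≠ y := by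
  intro hcon
  have : (a : ℂ) = 0 := by linear_combination hcon - h
  exact absurd this (by exact_mod_cast ha.ne')

namespace GLRep

variable {n : ℕ} {lam : Fin n → ℂ} {A : GLRep n lam}

/-- The vectors satisfying the relations coming from singular vectors. -/
def good (A : GLRep n lam) (mu : Fin n → ℂ) : Submodule ℂ A.V where
  carrier := {v | (∀ j : Fin n, A.Lev (mu j) j v) ∧ ∀ k j : Fin n, (k : ℕ) + 1 = j → ∀ N : ℕ,
    mu k - mu j = N → ((A.E k j : Module.End ℂ A.V) ^ (N + 1)) v = 0}
  zero_mem' := by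
    refine ⟨fun j i _ => by simp, fun k j _ N _ => map_zero _⟩
  add_mem' := by
    rintro a b ⟨ha1, ha2⟩ ⟨hb1, hb2⟩
    refine ⟨fun j i hi => ?_, fun k j hkj N hN => ?_⟩
    · simp only [map_add, Finset.sum_add_distrib, smul_add, ha1 j i hi, hb1 j i hi]
    · rw [map_add, ha2 k j hkj N hN, hb2 k j hkj N hN, add_zero]
  smul_mem' := by
    rintro c a ⟨ha1, ha2⟩
    refine ⟨fun j i hi => ?_, fun k j hkj N hN => ?_⟩
    · simp only [map_smul, ← Finset.smul_sum, ha1 j i hi]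
      rw [smul_comm]
    · rw [map_smul, ha2 k j hkj N hN, smul_zero]

lemma mem_good {mu : Fin n → ℂ} {v : A.V} : v ∈ A.good mu ↔
    (∀ j : Fin n, A.Lev (mu j) j v) ∧ ∀ k j : Fin n, (k : ℕ) + 1 = j → ∀ N : ℕ,
    mu k - mu j = N → ((A.E k j : Module.End ℂ A.V) ^ (N + 1)) v = 0 := Iff.rfl

lemma good_diag {mu : Fin n → ℂ} {v : A.V} (hv : v ∈ A.good mu) (b : Fin n) :
    A.E b b v ∈ A.good mu := by
  rw [mem_good] at hv ⊢
  refine ⟨fun j => (hv.1 j).diag b, fun k j hkj N hN => ?_⟩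
  have h1 := comm_pow_apply (A.E_diag_mul b k j) (by simp) N v
  have h2 := hv.2 k j hkj N hN
  have h3 : ((A.E k j : Module.End ℂ A.V) ^ N)
      ((((if b = k then (1 : ℂ) else 0) - (if j = b then 1 else 0)) • A.E k j : Module.End ℂ A.V) v)
      = 0 := by
    rw [LinearMap.smul_apply, map_smul]
    rw [pow_succ, Module.End.mul_apply] at h2
    rw [h2, smul_zero]
  rw [h2, h3, map_zero, smul_zero, add_zero] at h1
  exact h1.symm

theorem good_le {mu : Fin n → ℂ} (hmu : IsGLHighestWeight n mu)
    (hsep : ∀ i j : Fin n, i < j → SepCond n lam mu i j) : A.good mu ≤ (ℂ ∙ A.hv) := by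
  classical
  by_contra hcon
  obtain ⟨v, hvG, hvK, ν, hν⟩ := A.exists_wt (A.good mu) (ℂ ∙ A.hv)
    (fun i v hv => good_diag hv i) hcon
  obtain ⟨hLev, hNil⟩ := mem_good.mp hvG
  have hv0 : v ≠ 0 := by rintro rfl; exact hvK (zero_mem _)
  have hnot : ¬ A.High n v := fun hH => hvK (highest_unique (fun i j hij => hH i j hij j.2))
  have hH0 : A.High 0 v := fun i j _ hj => absurd hj (Nat.not_lt_zero _)
  obtain ⟨k, hHk, hHk1⟩ : ∃ k, A.High k v ∧ ¬ A.High (k + 1) v := by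
    by_contra hc
    push Not at hc
    have : ∀ k, A.High k v := fun k => by
      induction k with
      | zero => exact hH0
      | succ k ih => exact hc k ih
    exact hnot (this n)
  have hkn : k < n := by
    by_contra hc
    exact hnot (fun i j hij _ => hHk i j hij (by have := j.2; omega))
  let j : Fin n := ⟨k, hkn⟩
  rcases step hv0 (hLev j) hHk hν with hno | ⟨r, hrj, N, hN, hnr, h1, h2, hH'⟩
  · exact hHk1 hno
  have hrk : (r : ℕ) < k := hrj
  have hmj : lshiftC n mu j = lshiftC n ν r := hnr.symm
  -- nilpotency
  let k' : Fin n := ⟨k - 1, by omega⟩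
  have hkpeq : (k' : ℕ) + 1 = j := by simp only [k', j]; omega
  have hkplt : k' < j := by rw [Fin.lt_def]; omega
  obtain ⟨g, hg, hgap⟩ : ∃ g : ℕ, 0 < g ∧ lshiftC n mu k' = lshiftC n mu j + N + g := by
    obtain ⟨K, hK⟩ := hmu k' (by have := j.2; omega)
    have hjj : (⟨(k' : ℕ) + 1, by have := j.2; omega⟩ : Fin n) = j := Fin.ext hkpeq
    rw [hjj] at hK
    have hz := hNil k' j hkpeq K hK
    have hle : N ≤ K := by
      by_contra hlt
      have hz' := pow_zero_of_le (show K + 1 ≤ N by omega) hz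
      by_cases hrk' : r = k'
      · rw [hrk'] at h1
        exact h1 hz'
      · have hrk2 : r < k' := by
          rw [Fin.lt_def]
          have : (r : ℕ) ≠ k' := fun h => hrk' (Fin.ext h)
          simp only [k'] at this ⊢
          omega
        refine h1 (heis_zero (X := A.E r k') (Y := A.E k' j) ?_ ?_ ?_ N v ?_ hz')
        · rw [A.E_mul, if_pos rfl, if_neg hrj.ne', sub_zero]
        · rw [A.E_mul, if_neg hkplt.ne', if_neg hrj.ne']; simp
        · rw [A.E_mul, if_neg hrk2.ne', if_neg hrj.ne']; simp
        · exact hHk r k' hrk2 hkplt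
    refine ⟨K - N + 1, by omega, ?_⟩
    have hkc : ((k : ℕ) : ℂ) = ((k' : ℕ) : ℂ) + 1 := by
      have : k = (k' : ℕ) + 1 := hkpeq.symm
      rw [this]; push_cast; ring
    simp only [lshiftC]
    rw [Nat.cast_add, Nat.cast_sub hle]
    simp only [j] at hK ⊢
    rw [hkc]
    push_cast
    linear_combination hK
  -- the value of l_r
  have hν' := hν.pow r j N
  have hjr : j ≠ r := hrj.ne'
  have hνr : lshiftC n (fun i => ν i + N * ((if i = r then (1 : ℂ) else 0) - (if j = i then 1 else 0))) r
      = lshiftC n mu j + N := by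
    rw [hmj]
    simp only [lshiftC, hjr, if_true, if_false]
    ring
  have hlr : lshiftC n lam r = lshiftC n mu j + N := by
    have c1 := (chain mu (n - (k + 1)) (k + 1) (by omega) _ _ h1 hν' hH'
        (fun j' hj' => (hLev j').stable_pow
          (lt_trans hrj (show k < (j' : ℕ) by omega)) (show k < (j' : ℕ) by omega) N)).1 r
          (by omega) ?_
    · rw [← c1, hνr]
    · intro J hJ
      rw [hνr]
      obtain ⟨t, ht⟩ := hmu.diff_le (show j ≤ J from (show k ≤ (J : ℕ) by omega))
      exact nat_ne_aux (t + N) (by omega) (by rw [ht]; push_cast; ring)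
  obtain ⟨J, hkJ, ⟨t, hJt⟩, hJs⟩ : ∃ J : Fin n, k ≤ (J : ℕ) ∧
      (∃ t : ℕ, lshiftC n mu J = lshiftC n lam J + t) ∧
        ∀ s : Fin n, s ≤ J → lshiftC n mu J ≠ lshiftC n lam s := by
    rcases (chain mu (n - k) k (by omega) v ν hv0 hν hHk (fun j' _ => hLev j')).2 with c | c
    · exfalso
      have h3 := c r hrk
      exact nat_ne_aux N hN hlr (by rw [← h3, hmj])
    · exact c
  have hjJ : j ≤ J := hkJ
  obtain ⟨u, hu⟩ := hmu.diff_le hjJ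
  rcases hsep r J (hrj.trans_le hjJ) with ⟨hs, -⟩ | ⟨-, hs⟩
  · refine hs ⟨⟨t, hJt⟩, ⟨u + N, ?_⟩, fun s _ hs2 => hJs s hs2⟩
    rw [hlr, hu]; push_cast; ring
  · have hrk2 : r ≤ k' := by
      rw [Fin.le_def]; simp only [k']; omega
    refine hs ⟨⟨u + N, ?_⟩, ?_, fun s _ _ => ?_⟩
    · rw [hlr, hu]; push_cast; ring
    · obtain ⟨w, hw⟩ := hmu.diff_le hrk2
      exact ⟨g + w, by rw [hw, hgap, hlr]; push_cast; ring⟩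
    · rw [hlr]
      by_cases hsj : j ≤ s
      · obtain ⟨w, hw⟩ := hmu.diff_le hsj
        exact nat_ne_aux (w + N) (by omega) (by rw [hw]; push_cast; ring)
      · have hsk : s ≤ k' := by
          rw [Fin.le_def]; rw [not_le, Fin.lt_def] at hsj; simp only [k', j] at hsj ⊢; omega
        obtain ⟨w, hw⟩ := hmu.diff_le hsk
        exact (nat_ne_aux (w + g) (by omega) (by rw [hw, hgap]; push_cast; ring)).symm

end GLRep

/-! ### The dual module and the reduction to a single module -/

namespace GLRep

variable {n : ℕ} {lam mu : Fin n → ℂ}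

lemma exists_functional (B : GLRep n mu) : ∃ φ : Module.Dual ℂ B.V, φ B.hv ≠ 0 ∧
    (∀ i j : Fin n, j < i → φ ∘ₗ B.E i j = 0) ∧ ∀ i, φ ∘ₗ B.E i i = mu i • φ := by
  obtain ⟨c, hc⟩ : ∃ c : ℂ, B.H B.hv = c • B.hv := ⟨_, B.hv_wt.H⟩
  have hnot : B.hv ∉ B.lowPart c := fun h => B.hv_ne
    ((Submodule.disjoint_def.mp (lowPart_disj B c)) _ (Module.End.mem_eigenspace_iff.mpr hc) h)
  obtain ⟨φ, hφ, hφ2⟩ := Submodule.exists_dual_map_eq_bot_of_notMem hnot inferInstance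
  have hlow : ∀ w ∈ B.lowPart c, φ w = 0 := by
    intro w hw
    have : φ w ∈ (B.lowPart c).map φ := Submodule.mem_map_of_mem hw
    rw [hφ2] at this
    simpa using this
  have hdec := decomp B.hv_wt B.hv_ne B.hv_upper hc
  refine ⟨φ, hφ, fun i j hij => ?_, fun i => ?_⟩
  · ext w
    have hw : w ∈ (ℂ ∙ B.hv) ⊔ B.lowPart c := by rw [hdec]; trivial
    obtain ⟨a, ha, b, hb, rfl⟩ := Submodule.mem_sup.mp hw
    obtain ⟨t, rfl⟩ := Submodule.mem_span_singleton.mp ha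
    simp [hlow _ (lower_mem_lowPart hc hij), hlow _ (lowPart_lower hij hb)]
  · ext w
    have hw : w ∈ (ℂ ∙ B.hv) ⊔ B.lowPart c := by rw [hdec]; trivial
    obtain ⟨a, ha, b, hb, rfl⟩ := Submodule.mem_sup.mp hw
    obtain ⟨t, rfl⟩ := Submodule.mem_span_singleton.mp ha
    simp [hlow _ hb, hlow _ (lowPart_diag (i := i) hb), B.hv_diag]
    ring

/-- The contragredient (transposed) module. -/
noncomputable def dual (B : GLRep n mu) (φ : Module.Dual ℂ B.V) (hφ : φ B.hv ≠ 0)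
    (h1 : ∀ i j : Fin n, j < i → φ ∘ₗ B.E i j = 0) (h2 : ∀ i, φ ∘ₗ B.E i i = mu i • φ) :
    GLRep n mu where
  V := Module.Dual ℂ B.V
  E := fun i j => (B.E j i).dualMap
  commRel := by
    intro i j k l
    ext ψ w
    have h := congrArg (fun T => ψ (T w)) (B.commRel l k j i)
    simp only [LinearMap.sub_apply, LinearMap.comp_apply, map_sub] at h
    simp only [LinearMap.sub_apply, LinearMap.comp_apply, LinearMap.dualMap_apply]
    rw [h]
    by_cases hjk : j = k
    · subst hjk
      by_cases hli : l = i
      · subst hli; simp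
      · simp [hli, Ne.symm hli]
    · by_cases hli : l = i
      · subst hli; simp [hjk, Ne.symm hjk]
      · simp [hjk, hli, Ne.symm hjk, Ne.symm hli]
  hv := φ
  hv_ne := by rintro rfl; exact hφ rfl
  hv_upper := fun i j hij => h1 j i hij
  hv_diag := fun i => h2 i
  irreducible := by
    intro U hU
    have hst : ∀ i j : Fin n, ∀ v ∈ U.dualCoannihilator, B.E i j v ∈ U.dualCoannihilator := by
      intro i j v hv
      rw [Submodule.mem_dualCoannihilator] at hv ⊢
      intro ψ hψ
      exact hv _ (hU j i ψ hψ)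
    have hback : U.dualCoannihilator.dualAnnihilator = U :=
      Subspace.dualCoannihilator_dualAnnihilator_eq
    rcases B.irreducible _ hst with h | h
    · right
      rw [← hback, h, Submodule.dualAnnihilator_bot]
    · left
      rw [← hback, h, Submodule.dualAnnihilator_top]

/-- contraction of the second tensor factor -/
noncomputable def ev (A : GLRep n lam) (B : GLRep n mu) (ψ : Module.Dual ℂ B.V) :
    A.V ⊗[ℂ] B.V →ₗ[ℂ] A.V :=
  (TensorProduct.rid ℂ A.V).toLinearMap ∘ₗ LinearMap.lTensor A.V ψ

lemma ev_tmul (A : GLRep n lam) (B : GLRep n mu) (ψ : Module.Dual ℂ B.V) (x : A.V) (y : B.V) :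
    ev A B ψ (x ⊗ₜ y) = ψ y • x := by
  simp [ev]

lemma ev_map (A : GLRep n lam) (B : GLRep n mu) (ψ : Module.Dual ℂ B.V) (f : A.V →ₗ[ℂ] A.V)
    (g : B.V →ₗ[ℂ] B.V) (ζ : A.V ⊗[ℂ] B.V) :
    ev A B ψ (TensorProduct.map f g ζ) = f (ev A B (ψ ∘ₗ g) ζ) := by
  induction ζ using TensorProduct.induction_on with
  | zero => simp
  | tmul x y => simp [ev_tmul]
  | add x y hx hy => simp only [map_add, hx, hy]

lemma ev_add (A : GLRep n lam) (B : GLRep n mu) (ψ ψ' : Module.Dual ℂ B.V) (ζ : A.V ⊗[ℂ] B.V) :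
    ev A B (ψ + ψ') ζ = ev A B ψ ζ + ev A B ψ' ζ := by
  simp [ev, LinearMap.lTensor_add]

lemma ev_smul (A : GLRep n lam) (B : GLRep n mu) (c : ℂ) (ψ : Module.Dual ℂ B.V)
    (ζ : A.V ⊗[ℂ] B.V) : ev A B (c • ψ) ζ = c • ev A B ψ ζ := by
  simp [ev, LinearMap.lTensor_smul]

lemma ev_zero (A : GLRep n lam) (B : GLRep n mu) (ζ : A.V ⊗[ℂ] B.V) : ev A B 0 ζ = 0 := by
  simp [ev]

lemma eq_zero_of_ev (A : GLRep n lam) (B : GLRep n mu) (ζ : A.V ⊗[ℂ] B.V)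
    (h : ∀ ψ, ev A B ψ ζ = 0) : ζ = 0 := by
  classical
  let b := Module.finBasis ℂ B.V
  apply (TensorProduct.equivFinsuppOfBasisRight (M := A.V) b).injective
  rw [map_zero]
  ext i
  rw [TensorProduct.equivFinsuppOfBasisRight_apply]
  exact h (b.coord i)

lemma ev_t1 {A : GLRep n lam} {B : GLRep n mu} {ζ : A.V ⊗[ℂ] B.V} {i j : Fin n}
    (h : t1 A B i j ζ = 0) (ψ : Module.Dual ℂ B.V) :
    ev A B (ψ ∘ₗ B.E i j) ζ = - A.E i j (ev A B ψ ζ) := by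
  have h1 := congrArg (ev A B ψ) h
  rw [t1, LinearMap.add_apply, map_add, ev_map, ev_map, map_zero, LinearMap.comp_id,
    LinearMap.id_apply, add_comm] at h1
  exact eq_neg_of_add_eq_zero_left h1

lemma ev_t1_pow {A : GLRep n lam} {B : GLRep n mu} {ζ : A.V ⊗[ℂ] B.V} {i j : Fin n}
    (h : t1 A B i j ζ = 0) (K : ℕ) : ∀ (ψ : Module.Dual ℂ B.V),
    ev A B ((((B.E i j).dualMap : Module.End ℂ (Module.Dual ℂ B.V)) ^ K) ψ) ζ
      = (-1 : ℂ) ^ K • ((A.E i j : Module.End ℂ A.V) ^ K) (ev A B ψ ζ) := by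
  induction K with
  | zero => intro ψ; simp
  | succ K ih =>
    intro ψ
    rw [pow_succ, Module.End.mul_apply, ih]
    have : ev A B ((B.E i j).dualMap ψ) ζ = - A.E i j (ev A B ψ ζ) := ev_t1 h ψ
    rw [this, pow_succ, pow_succ, Module.End.mul_apply, map_neg]
    module

theorem highest_main (hmu : IsGLHighestWeight n mu)
    (hsep : ∀ i j : Fin n, i < j → SepCond n lam mu i j)
    (A : GLRep n lam) (B : GLRep n mu) (ζ : A.V ⊗[ℂ] B.V)
    (hζ1 : ∀ i j : Fin n, i < j → t1 A B i j ζ = 0)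
    (hζ2 : ∀ i j : Fin n, i < j → t2 A B i j ζ = 0) :
    ∃ c : ℂ, ζ = c • (A.hv ⊗ₜ[ℂ] B.hv) := by
  classical
  obtain ⟨φ, hφ, hφ1, hφ2⟩ := exists_functional B
  let D := dual B φ hφ hφ1 hφ2
  -- injectivity
  have hinj : ∀ ξ : A.V ⊗[ℂ] B.V, (∀ i j : Fin n, i < j → t1 A B i j ξ = 0) →
      ev A B φ ξ = 0 → ξ = 0 := by
    intro ξ hξ h0
    let P : Submodule ℂ (Module.Dual ℂ B.V) :=
      { carrier := {ψ | ev A B ψ ξ = 0}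
        zero_mem' := ev_zero A B ξ
        add_mem' := fun {a b} ha hb => by
          simp only [Set.mem_ofPred_eq] at ha hb ⊢
          rw [ev_add, ha, hb, add_zero]
        smul_mem' := fun c a ha => by
          simp only [Set.mem_ofPred_eq] at ha ⊢
          rw [ev_smul, ha, smul_zero] }
    have hcl : ∀ i j : Fin n, j < i → ∀ ψ : Module.Dual ℂ B.V, ev A B ψ ξ = 0 →
        ev A B (ψ ∘ₗ B.E j i) ξ = 0 := by
      intro i j hij ψ hψ
      rw [ev_t1 (hξ j i hij), hψ, map_zero, neg_zero]
    have hP : P = ⊤ := low_ind (A := D) D.hv_wt D.hv_ne D.hv_upper P h0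
      (fun i j hij ψ hψ => hcl i j hij ψ hψ)
    apply eq_zero_of_ev
    intro ψ
    have : ψ ∈ P := by rw [hP]; trivial
    exact this
  have hgood : ev A B φ ζ ∈ A.good mu := by
    rw [mem_good]
    refine ⟨fun j i hi => ?_, fun k j hkj N hN => ?_⟩
    · have h1 := congrArg (ev A B φ) (hζ2 i j hi)
      rw [t2, LinearMap.sum_apply, map_sum, map_zero] at h1
      have h2 : ∀ a ∈ (Finset.univ : Finset (Fin n)),
          ev A B φ (TensorProduct.map (A.E i a) (B.E a j) ζ)
          = (if a = j then mu j • A.E i j (ev A B φ ζ) else 0) -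
            (if a ∈ Finset.Iio j then A.E i a (A.E a j (ev A B φ ζ)) else 0) := by
        intro a _
        rw [ev_map]
        rcases lt_trichotomy a j with h | h | h
        · rw [ev_t1 (hζ1 a j h), if_neg h.ne, if_pos (Finset.mem_Iio.mpr h), map_neg, zero_sub]
        · subst h
          rw [hφ2, ev_smul, map_smul]
          simp
        · rw [hφ1 a j h, ev_zero, map_zero, if_neg h.ne', if_neg (by simpa using h.le), sub_zero]
      rw [Finset.sum_congr rfl h2, Finset.sum_sub_distrib, Finset.sum_ite_eq',
        if_pos (Finset.mem_univ _), Finset.sum_ite_mem, Finset.univ_inter] at h1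
      exact (sub_eq_zero.mp h1).symm
    · have hlt : k < j := by rw [Fin.lt_def]; omega
      obtain ⟨N', hN', -, h3⟩ := prim (A := D) D.hv_wt D.hv_ne hlt.ne (D.hv_upper k j hlt)
      have hNN : N' = N := by
        have : (N' : ℂ) = N := by rw [← hN', ← hN]
        exact_mod_cast this
      subst hNN
      have h4 := ev_t1_pow (hζ1 k j hlt) (N' + 1) φ
      have h5 : (((B.E k j).dualMap : Module.End ℂ (Module.Dual ℂ B.V)) ^ (N' + 1)) φ = 0 := h3
      rw [h5, ev_zero] at h4
      rcases smul_eq_zero.mp h4.symm with h6 | h6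
      · exact absurd h6 (pow_ne_zero _ (by norm_num))
      · exact h6
  obtain ⟨c, hc⟩ := Submodule.mem_span_singleton.mp (good_le hmu hsep hgood)
  refine ⟨c * (φ B.hv)⁻¹, ?_⟩
  rw [← sub_eq_zero]
  apply hinj
  · intro i j hij
    rw [map_sub, hζ1 i j hij, map_smul, t1, LinearMap.add_apply, TensorProduct.map_tmul,
      TensorProduct.map_tmul, A.hv_upper i j hij, B.hv_upper i j hij]
    simp
  · rw [map_sub, map_smul, ev_tmul, ← hc, smul_smul, mul_assoc, inv_mul_cancel₀ hφ, mul_one,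
      sub_self]

end GLRep

/-! ### Twisting by permutations -/

namespace GLRep

variable {n : ℕ} {lam mu : Fin n → ℂ}

/-- The module twisted by a permutation of the basis. -/
noncomputable def twist (A : GLRep n lam) (σ : Equiv.Perm (Fin n)) (v : A.V) (hv : v ≠ 0)
    (h1 : ∀ i j : Fin n, i < j → A.E (σ i) (σ j) v = 0)
    (h2 : ∀ i, A.E (σ i) (σ i) v = lam i • v) : GLRep n lam where
  V := A.V
  E := fun i j => A.E (σ i) (σ j)
  commRel := by
    intro i j k l
    rw [A.commRel]
    simp only [EmbeddingLike.apply_eq_iff_eq]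
  hv := v
  hv_ne := hv
  hv_upper := h1
  hv_diag := h2
  irreducible := by
    intro U hU
    refine A.irreducible U (fun i j v hv => ?_)
    have := hU (σ.symm i) (σ.symm j) v hv
    simpa using this

/-- existence of an extremal vector -/
def HasExt (A : GLRep n lam) (σ : Equiv.Perm (Fin n)) : Prop :=
  ∃ v : A.V, v ≠ 0 ∧ (∀ i j : Fin n, i < j → A.E (σ i) (σ j) v = 0) ∧
    ∀ i, A.E (σ i) (σ i) v = lam i • v

lemma hasExt_swap (A : GLRep n lam) (p q : Fin n) (hpq : (p : ℕ) + 1 = q) :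
    A.HasExt (Equiv.swap p q) := by
  have hlt : p < q := by rw [Fin.lt_def]; omega
  obtain ⟨N, hN, h1, h2⟩ := prim A.hv_wt A.hv_ne hlt.ne (A.hv_upper p q hlt)
  have hwt := A.hv_wt.pow q p N
  refine ⟨_, h1, fun i j hij => ?_, fun i => ?_⟩
  · -- the pair
    have hcases : (i = p ∧ j = q) ∨ (Equiv.swap p q i < Equiv.swap p q j) := by
      by_cases hip : i = p
      · subst hip
        by_cases hjq : j = q
        · exact Or.inl ⟨rfl, hjq⟩
        · right
          rw [Equiv.swap_apply_left, Equiv.swap_apply_of_ne_of_ne hij.ne' hjq]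
          rw [Fin.lt_def] at hij ⊢
          have : (j : ℕ) ≠ q := fun h => hjq (Fin.ext h)
          omega
      · right
        by_cases hiq : i = q
        · subst hiq
          rw [Equiv.swap_apply_right, Equiv.swap_apply_of_ne_of_ne (hlt.trans hij).ne' hij.ne']
          exact hlt.trans hij
        · rw [Equiv.swap_apply_of_ne_of_ne hip hiq]
          by_cases hjp : j = p
          · subst hjp
            rw [Equiv.swap_apply_left]; exact hij.trans hlt
          · by_cases hjq : j = q
            · subst hjq
              rw [Equiv.swap_apply_right]
              have : (i : ℕ) ≠ p := fun h => hip (Fin.ext h)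
              rw [Fin.lt_def] at hij ⊢
              omega
            · rwa [Equiv.swap_apply_of_ne_of_ne hjp hjq]
    rcases hcases with ⟨rfl, rfl⟩ | hs
    · rw [Equiv.swap_apply_left, Equiv.swap_apply_right]
      rw [pow_succ', Module.End.mul_apply] at h2
      exact h2
    · by_cases hab : Equiv.swap p q i = p ∧ Equiv.swap p q j = q
      · exfalso
        have e1 : i = q := (Equiv.swap p q).injective (by rw [hab.1, Equiv.swap_apply_right])
        have e2 : j = p := (Equiv.swap p q).injective (by rw [hab.2, Equiv.swap_apply_left])
        rw [e1, e2] at hij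
        exact absurd hij (not_lt.mpr hlt.le)
      · generalize Equiv.swap p q i = a at hs hab
        generalize Equiv.swap p q j = b at hs hab
        -- E a b with a < b, (a, b) ≠ (p, q)
        cases N with
        | zero => simpa using A.hv_upper a b hs
        | succ M =>
          have hc := A.E_mul a b q p
          rw [Fin.lt_def] at hs
          have hz : ((if b = q then A.E a p else 0) - (if p = a then A.E q b else 0)
              : Module.End ℂ A.V) A.hv = 0 := by
            rw [LinearMap.sub_apply]
            split_ifs with e1 e2 e2
            · exact absurd ⟨e2.symm, e1⟩ hab
            · have : a < p := by
                rw [Fin.lt_def]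
                have : (a : ℕ) ≠ p := fun h => e2 (Fin.ext h.symm)
                rw [e1] at hs
                omega
              rw [A.hv_upper a p this]; simp
            · have : q < b := by
                rw [Fin.lt_def]
                have : (b : ℕ) ≠ q := fun h => e1 (Fin.ext h)
                rw [← e2] at hs
                omega
              rw [A.hv_upper q b this]; simp
            · simp
          have hZ : ((if b = q then A.E a p else 0) - (if p = a then A.E q b else 0)
              : Module.End ℂ A.V) * A.E q p
              = A.E q p * ((if b = q then A.E a p else 0) - (if p = a then A.E q b else 0)) := by
            split_ifs with e1 e2 e2
            · exact absurd ⟨e2.symm, e1⟩ hab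
            · have : p ≠ q := hlt.ne
              rw [sub_zero, A.E_mul, if_neg this, if_neg e2]; simp
            · have hbq : b ≠ q := e1
              rw [zero_sub, neg_mul, A.E_mul, if_neg hbq, if_neg hlt.ne]; simp
            · simp
          rw [comm_pow_apply hc hZ M, hz, A.hv_upper a b hs]
          simp
  · rw [hwt]
    congr 1
    have hpq' : p ≠ q := hlt.ne
    by_cases hip : i = p
    · subst hip
      rw [Equiv.swap_apply_left]
      simp only [hpq', if_true, if_false]
      rw [← hN]; ring
    · by_cases hiq : i = q
      · subst hiq
        rw [Equiv.swap_apply_right]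
        simp only [hpq', if_true, if_false]
        rw [← hN]; ring
      · rw [Equiv.swap_apply_of_ne_of_ne hip hiq]
        simp [hiq, Ne.symm hip]

lemma hasExt_all (A : GLRep n lam) (σ : Equiv.Perm (Fin n)) : A.HasExt σ := by
  cases n with
  | zero =>
    refine ⟨A.hv, A.hv_ne, fun i => i.elim0, fun i => i.elim0⟩
  | succ m =>
    refine Submonoid.induction_of_closure_eq_top_right (Equiv.Perm.mclosure_swap_castSucc_succ m)
      σ ⟨A.hv, A.hv_ne, A.hv_upper, A.hv_diag⟩ ?_
    rintro τ _ ⟨i, rfl⟩ ⟨v, hv, h1, h2⟩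
    obtain ⟨w, hw, h3, h4⟩ := hasExt_swap (twist A τ v hv h1 h2) i.castSucc i.succ (by simp)
    exact ⟨w, hw, h3, h4⟩

end GLRep
/-- Under the separation conditions for all pairs `i < j`,
together with `m_1, m_n ∉ ⟨l_n, l_1⟩`, any vector `ζ'` of `L(λ) ⊗ L(μ)`
annihilated by all lower-triangular Yangian generators (`t_{ij}(u)ζ' = 0` for
`i > j`) is a scalar multiple of the tensor product `η ⊗ η'` of the lowest
vectors of `L(λ)` and `L(μ)`. -/
theorem lowest_singular_vector_eq_smul_lowest
    (n : ℕ) (hn : 0 < n) (lam mu : Fin n → ℂ)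
    (hlam : IsGLHighestWeight n lam) (hmu : IsGLHighestWeight n mu)
    (hsep : ∀ i j : Fin n, i < j → SepCond n lam mu i j)
    (hextra1 : lshiftC n mu ⟨0, hn⟩ ∉
      bracketC n (lshiftC n lam) ⟨0, hn⟩ ⟨n - 1, by omega⟩)
    (hextra2 : lshiftC n mu ⟨n - 1, by omega⟩ ∉
      bracketC n (lshiftC n lam) ⟨0, hn⟩ ⟨n - 1, by omega⟩)
    (A : GLRep n lam) (B : GLRep n mu)
    (η : A.V) (hη : η ≠ 0) (hηlow : ∀ i j : Fin n, j < i → A.E i j η = 0)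
    (η' : B.V) (hη' : η' ≠ 0) (hη'low : ∀ i j : Fin n, j < i → B.E i j η' = 0)
    (ζ' : A.V ⊗[ℂ] B.V)
    (hζ'1 : ∀ i j : Fin n, j < i → t1 A B i j ζ' = 0)
    (hζ'2 : ∀ i j : Fin n, j < i → t2 A B i j ζ' = 0) :
    ∃ c : ℂ, ζ' = c • (η ⊗ₜ[ℂ] η') := by
  obtain ⟨v, hv, h1, h2⟩ := A.hasExt_all Fin.revPerm
  obtain ⟨w, hw, k1, k2⟩ := B.hasExt_all Fin.revPerm
  let A' := A.twist Fin.revPerm v hv h1 h2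
  let B' := B.twist Fin.revPerm w hw k1 k2
  have hrev : ∀ i j : Fin n, i < j → Fin.revPerm j < Fin.revPerm i := by
    intro i j hij
    simpa using hij
  obtain ⟨c, hc⟩ := GLRep.highest_main hmu hsep A' B' ζ'
    (fun i j hij => hζ'1 (Fin.revPerm i) (Fin.revPerm j) (hrev i j hij))
    (fun i j hij => by
      have h := hζ'2 (Fin.revPerm i) (Fin.revPerm j) (hrev i j hij)
      rw [t2, ← Equiv.sum_comp Fin.revPerm] at h
      exact h)
  have e1 : η ∈ Submodule.span ℂ {v} := GLRep.highest_unique (A := A') (y := η)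
    (fun i j hij => hηlow _ _ (hrev i j hij))
  have e2 : η' ∈ Submodule.span ℂ {w} := GLRep.highest_unique (A := B') (y := η')
    (fun i j hij => hη'low _ _ (hrev i j hij))
  obtain ⟨a, rfl⟩ := Submodule.mem_span_singleton.mp e1
  obtain ⟨b, rfl⟩ := Submodule.mem_span_singleton.mp e2
  have ha : a ≠ 0 := by rintro rfl; exact hη (zero_smul _ _)
  have hb : b ≠ 0 := by rintro rfl; exact hη' (zero_smul _ _)
  refine ⟨c * (a * b)⁻¹, ?_⟩
  have hc' : ζ' = c • (v ⊗ₜ[ℂ] w) := hc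
  rw [hc', TensorProduct.smul_tmul_smul, smul_smul, mul_assoc,
    inv_mul_cancel₀ (mul_ne_zero ha hb), mul_one]
end

section
/- Let n ≥ 2 and let λ and μ be gl_n-highest weights; set λ_− = (λ_1,…,λ_{n−1}), λ_+ = (λ_2,…,λ_n), μ_− = (μ_1,…,μ_{n−1}), μ_+ = (μ_2,…,μ_n), which are gl_{n−1}-highest weights. If the Y(gl_n)-module L(λ)⊗L(μ) is irreducible, then both Y(gl_{n−1})-modules L(λ_−)⊗L(μ_−) and L(λ_+)⊗L(μ_+) are irreducible. -/
open scoped TensorProduct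

/-- The defining relations of `gl_n` in matrix-unit form. -/
def GLRel {ι R : Type*} [DecidableEq ι] [Ring R] (E : ι → ι → R) : Prop :=
  ∀ i j k l, E i j * E k l - E k l * E i j
      = (if j = k then E i l else 0) - (if l = i then E k j else 0)

/-- The level-two Yangian relations between `t^{(1)}` and `t^{(2)}`. -/
structure YRel {ι R : Type*} [DecidableEq ι] [Ring R] (T S : ι → ι → R) : Prop where
  r11 : GLRel T
  r12 : ∀ i j k l, T i j * S k l - S k l * T i j
      = (if j = k then S i l else 0) - (if l = i then S k j else 0)
  r22 : ∀ i j k l, S i j * S k l - S k l * S i j = T k j * S i l - S k j * T i l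

theorem YRel.of_gl {ι R : Type*} [DecidableEq ι] [Ring R] {E : ι → ι → R} (h : GLRel E) :
    YRel E (fun _ _ => (0 : R)) :=
  ⟨h, by intros; simp, by intros; simp⟩

theorem YRel.flip {ι R : Type*} [DecidableEq ι] [Ring R] {T S : ι → ι → R} (h : YRel T S) :
    YRel (fun i j => - T j i) (fun i j => S j i) := by
  refine ⟨?_, ?_, ?_⟩
  · intro i j k l
    have := h.r11 j i l k
    simp only [eq_comm (a := k) (b := j), eq_comm (a := i) (b := l)] at this
    have e : - T j i * - T l k - - T l k * - T j i = T j i * T l k - T l k * T j i := by noncomm_ring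
    rw [e, this]
    split_ifs <;> simp [sub_eq_add_neg, add_comm]
  · intro i j k l
    have := h.r12 j i l k
    simp only [eq_comm (a := k) (b := j), eq_comm (a := i) (b := l)] at this
    have e : - T j i * S l k - S l k * - T j i = -(T j i * S l k - S l k * T j i) := by noncomm_ring
    rw [e, this]
    abel
  · intro i j k l
    have h1 := h.r22 j i l k
    have h2 := h.r12 l i j k
    have h3 := h.r12 j k l i
    simp only [eq_comm (a := k) (b := l), eq_comm (a := i) (b := j)] at h2 h3
    have e : - T j k * S l i - S j k * - T l i
      = (T l i * S j k - S l i * T j k) - (T l i * S j k - S j k * T l i)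
        - (T j k * S l i - S l i * T j k) := by noncomm_ring
    rw [e, h1, h2, h3]
    abel

theorem YRel.of_commute {ι R : Type*} [DecidableEq ι] [Fintype ι] [Ring R] {X Y : ι → ι → R}
    (hX : GLRel X) (hY : GLRel Y) (hc : ∀ i j k l, X i j * Y k l = Y k l * X i j) :
    YRel (fun i j => X i j + Y i j) (fun i j => ∑ a, X i a * Y a j) := by
  refine ⟨?_, ?_, ?_⟩
  · intro i j k l
    have h1 := hX i j k l
    have h2 := hY i j k l
    have h3 := hc i j k l
    have h4 := hc k l i j
    have e : (X i j + Y i j) * (X k l + Y k l) - (X k l + Y k l) * (X i j + Y i j)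
      = (X i j * X k l - X k l * X i j) + (Y i j * Y k l - Y k l * Y i j)
       + (X i j * Y k l - Y k l * X i j) - (X k l * Y i j - Y i j * X k l) := by noncomm_ring
    rw [e, h1, h2, h3, h4]
    split_ifs <;> simp only [sub_self, add_zero, sub_zero, zero_sub] <;> abel
  · intro i j k l
    simp only [Finset.mul_sum, Finset.sum_mul, ← Finset.sum_sub_distrib]
    have e : ∀ a, (X i j + Y i j) * (X k a * Y a l) - X k a * Y a l * (X i j + Y i j)
      = (if j = k then X i a * Y a l else 0) - (if a = i then X k j * Y a l else 0)
        + ((if j = a then X k a * Y i l else 0) - (if l = i then X k a * Y a j else 0)) := by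
      intro a
      have h1 := hX i j k a
      have h2 := hY i j a l
      have h3 := hc i j a l
      have h4 := hc k a i j
      have e1 : (X i j + Y i j) * (X k a * Y a l) - X k a * Y a l * (X i j + Y i j)
        = (X i j * X k a - X k a * X i j) * Y a l + X k a * (Y i j * Y a l - Y a l * Y i j)
          + X k a * (X i j * Y a l - Y a l * X i j)
          - (X k a * Y i j - Y i j * X k a) * Y a l := by noncomm_ring
      rw [e1, h1, h2, h3, h4]
      simp only [sub_self, mul_zero, zero_mul, add_zero, sub_zero, sub_mul, mul_sub, ite_mul,
        mul_ite]
    simp only [e, Finset.sum_add_distrib, Finset.sum_sub_distrib]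
    simp only [Finset.sum_ite_eq, Finset.sum_ite_eq', Finset.mem_univ, if_true]
    split_ifs <;> (try simp only [Finset.sum_const_zero]) <;> abel
  · intro i j k l
    have e : ∀ a b, X i a * Y a j * (X k b * Y b l) - X k b * Y b l * (X i a * Y a j)
      = ((if a = k then X i b * Y a j * Y b l else 0)
        - (if b = i then X k a * Y a j * Y b l else 0))
        + ((if j = b then X k b * X i a * Y a l else 0)
        - (if l = a then X k b * X i a * Y b j else 0)) := by
      intro a b
      have h1 := hX i a k b
      have h2 := hY a j b l
      have h3 := hc k b a j
      have h4 := hc i a b l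
      have e1 : X i a * Y a j * (X k b * Y b l) - X k b * Y b l * (X i a * Y a j)
        = (X i a * X k b - X k b * X i a) * Y a j * Y b l
          + X k b * X i a * (Y a j * Y b l - Y b l * Y a j)
          - X i a * (X k b * Y a j - Y a j * X k b) * Y b l
          + X k b * (X i a * Y b l - Y b l * X i a) * Y a j := by noncomm_ring
      rw [e1, h1, h2, h3, h4]
      simp only [sub_self, mul_zero, zero_mul, add_zero, sub_zero, sub_mul, mul_sub, ite_mul,
        mul_ite]
    have L : (∑ a, X i a * Y a j) * (∑ b, X k b * Y b l)
        - (∑ b, X k b * Y b l) * (∑ a, X i a * Y a j)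
      = ∑ a, ∑ b, (X i a * Y a j * (X k b * Y b l) - X k b * Y b l * (X i a * Y a j)) := by
      simp only [Finset.sum_sub_distrib]
      rw [Finset.sum_mul_sum, Finset.sum_mul_sum]
      congr 1
      exact Finset.sum_comm
    have z1 : ∑ a, ∑ b, (if a = k then X i b * Y a j * Y b l else 0)
        = Y k j * ∑ b, X i b * Y b l := by
      rw [Finset.sum_comm, Finset.mul_sum]
      refine Finset.sum_congr rfl fun b _ => ?_
      rw [Finset.sum_ite_eq' Finset.univ k, if_pos (Finset.mem_univ _), hc, mul_assoc]
    have z2 : ∑ a, ∑ b, (if b = i then X k a * Y a j * Y b l else 0)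
        = (∑ a, X k a * Y a j) * Y i l := by
      rw [Finset.sum_mul]
      refine Finset.sum_congr rfl fun b _ => ?_
      rw [Finset.sum_ite_eq' Finset.univ i, if_pos (Finset.mem_univ _)]
    have z3 : ∑ a, ∑ b, (if j = b then X k b * X i a * Y a l else 0)
        = X k j * ∑ b, X i b * Y b l := by
      rw [Finset.mul_sum]
      refine Finset.sum_congr rfl fun b _ => ?_
      rw [Finset.sum_ite_eq Finset.univ j, if_pos (Finset.mem_univ _), mul_assoc]
    have z4 : ∑ a, ∑ b, (if l = a then X k b * X i a * Y b j else 0)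
        = (∑ a, X k a * Y a j) * X i l := by
      rw [Finset.sum_comm, Finset.sum_mul]
      refine Finset.sum_congr rfl fun b _ => ?_
      rw [Finset.sum_ite_eq Finset.univ l, if_pos (Finset.mem_univ _), mul_assoc, hc, mul_assoc]
    rw [L]
    simp only [e, Finset.sum_add_distrib, Finset.sum_sub_distrib]
    rw [z1, z2, z3, z4, add_mul, mul_add]
    abel

theorem GLRel.apply {ι M : Type*} [DecidableEq ι] [AddCommGroup M] [Module ℂ M]
    {E : ι → ι → Module.End ℂ M} (h : GLRel E) (i j k l : ι) (v : M) :
    E i j (E k l v) = E k l (E i j v) + ((if j = k then E i l v else 0)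
      - (if l = i then E k j v else 0)) := by
  have := LinearMap.congr_fun (h i j k l) v
  rw [← sub_eq_iff_eq_add']
  simp only [LinearMap.sub_apply, Module.End.mul_apply] at this
  rw [this]
  split_ifs <;> simp

theorem eig_disj {M : Type*} [AddCommGroup M] [Module ℂ M] (H : Module.End ℂ M) (c : ℂ) (v : M)
    (hv : H v = c • v) (hv' : v ∈ ⨆ p : ℕ, H.eigenspace (c + (p + 1))) : v = 0 := by
  have h := (Module.End.eigenspaces_iSupIndep H) c
  rw [disjoint_iff_inf_le] at h
  have : v ∈ (⊥ : Submodule ℂ M) := by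
    apply h
    refine ⟨Module.End.mem_eigenspace_iff.2 hv, ?_⟩
    refine (iSup_le fun p => ?_ : (⨆ p : ℕ, H.eigenspace (c + (p + 1))) ≤ _) hv'
    refine le_iSup₂_of_le (c + (p + 1)) ?_ le_rfl
    intro hh
    have : (p : ℂ) + 1 = 0 := by simpa using hh
    exact Nat.cast_add_one_ne_zero p this
  simpa using this

/-- An operator shifting `H`-eigenvalues by a positive integer preserves `K ⊔ G`. -/
theorem shift_mem {M : Type*} [AddCommGroup M] [Module ℂ M] (H X : Module.End ℂ M) (c : ℂ)
    (q : ℕ) (hX : ∀ v, H (X v) = X (H v) + ((q : ℂ) + 1) • X v) (K : Submodule ℂ M)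
    (hK : ∀ v ∈ K, H v = c • v) (v : M)
    (hv : v ∈ K ⊔ ⨆ p : ℕ, H.eigenspace (c + (p + 1))) :
    X v ∈ K ⊔ ⨆ p : ℕ, H.eigenspace (c + (p + 1)) := by
  suffices hh : K ⊔ (⨆ p : ℕ, H.eigenspace (c + (p + 1)))
      ≤ (K ⊔ ⨆ p : ℕ, H.eigenspace (c + (p + 1))).comap X from hh hv
  refine sup_le ?_ (iSup_le fun p => ?_)
  · intro w hw
    refine Submodule.mem_sup_right (Submodule.mem_iSup_of_mem q ?_)
    rw [Module.End.mem_eigenspace_iff, hX, hK w hw, map_smul, ← add_smul]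
  · intro w hw
    rw [Module.End.mem_eigenspace_iff] at hw
    refine Submodule.mem_sup_right (Submodule.mem_iSup_of_mem (p + q + 1) ?_)
    rw [Module.End.mem_eigenspace_iff, hX, hw, map_smul, ← add_smul]
    congr 1
    push_cast
    ring

theorem key {ι M : Type*} [DecidableEq ι] [AddCommGroup M] [Module ℂ M]
    {T S : ι → ι → Module.End ℂ M} (h : YRel T S) (d : ι) (K W : Submodule ℂ M) (hKW : K ≤ W)
    (c c' : ℂ)
    (hT : ∀ i, i ≠ d → ∀ w ∈ W, T i d w = 0) (hS : ∀ i, i ≠ d → ∀ w ∈ W, S i d w = 0)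
    (hTd : ∀ w ∈ W, T d d w = c • w) (hSd : ∀ w ∈ W, S d d w = c' • w)
    (hKT : ∀ i j, i ≠ d → j ≠ d → ∀ w ∈ K, T i j w ∈ K)
    (hKS : ∀ i j, i ≠ d → j ≠ d → ∀ w ∈ K, S i j w ∈ K)
    (irr : ∀ U : Submodule ℂ M, (∀ i j, ∀ v ∈ U, T i j v ∈ U) → (∀ i j, ∀ v ∈ U, S i j v ∈ U) →
      U = ⊥ ∨ U = ⊤) : K = ⊥ ∨ W ≤ K := by
  have a11 := h.r11.apply
  have a12 : ∀ i j k l v, T i j (S k l v) = S k l (T i j v) + ((if j = k then S i l v else 0)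
      - (if l = i then S k j v else 0)) := by
    intro i j k l v
    have := LinearMap.congr_fun (h.r12 i j k l) v
    rw [← sub_eq_iff_eq_add']
    simp only [LinearMap.sub_apply, Module.End.mul_apply] at this
    rw [this]
    split_ifs <;> simp
  have a21 : ∀ i j k l v, S i j (T k l v) = T k l (S i j v) - ((if l = i then S k j v else 0)
      - (if j = k then S i l v else 0)) := by
    intro i j k l v
    rw [a12]; abel
  have a22 : ∀ i j k l v, S i j (S k l v) = S k l (S i j v) + (T k j (S i l v)
      - S k j (T i l v)) := by
    intro i j k l v
    have := LinearMap.congr_fun (h.r22 i j k l) v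
    rw [← sub_eq_iff_eq_add']
    simpa only [LinearMap.sub_apply, Module.End.mul_apply] using this
  -- smallest subspace containing `K` and stable under the operators `T d k`, `S d k`
  let C : Set (Submodule ℂ M) := {U | K ≤ U ∧ (∀ k, k ≠ d → ∀ v ∈ U, T d k v ∈ U) ∧
    (∀ k, k ≠ d → ∀ v ∈ U, S d k v ∈ U)}
  let F : Submodule ℂ M := sInf C
  have FC : ∀ U ∈ C, F ≤ U := fun U hU => sInf_le hU
  have FK : K ≤ F := le_sInf fun U hU => hU.1
  have FT : ∀ k, k ≠ d → ∀ v ∈ F, T d k v ∈ F := by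
    intro k hk v hv
    rw [Submodule.mem_sInf] at hv ⊢
    exact fun U hU => hU.2.1 k hk v (hv U hU)
  have FS : ∀ k, k ≠ d → ∀ v ∈ F, S d k v ∈ F := by
    intro k hk v hv
    rw [Submodule.mem_sInf] at hv ⊢
    exact fun U hU => hU.2.2 k hk v (hv U hU)
  -- level zero
  have L0 : ∀ v ∈ F, (∀ i j, i ≠ d → j ≠ d → T i j v ∈ F ∧ S i j v ∈ F) ∧ T d d v ∈ F ∧
      S d d v ∈ F := by
    let F0 : Submodule ℂ M :=
      { carrier := {v | v ∈ F ∧ (∀ i j, i ≠ d → j ≠ d → T i j v ∈ F ∧ S i j v ∈ F) ∧ T d d v ∈ F ∧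
          S d d v ∈ F}
        zero_mem' := by simp
        add_mem' := by
          rintro a b ⟨h1, h2, h3, h4⟩ ⟨h1', h2', h3', h4'⟩
          refine ⟨add_mem h1 h1', fun i j hi hj => ?_, ?_, ?_⟩
          · simp only [map_add]
            exact ⟨add_mem (h2 i j hi hj).1 (h2' i j hi hj).1,
              add_mem (h2 i j hi hj).2 (h2' i j hi hj).2⟩
          · rw [map_add]; exact add_mem h3 h3'
          · rw [map_add]; exact add_mem h4 h4'
        smul_mem' := by
          rintro r a ⟨h1, h2, h3, h4⟩
          refine ⟨F.smul_mem r h1, fun i j hi hj => ?_, ?_, ?_⟩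
          · simp only [map_smul]
            exact ⟨F.smul_mem r (h2 i j hi hj).1, F.smul_mem r (h2 i j hi hj).2⟩
          · rw [map_smul]; exact F.smul_mem r h3
          · rw [map_smul]; exact F.smul_mem r h4 }
    have : F ≤ F0 := by
      apply FC
      refine ⟨?_, ?_, ?_⟩
      · intro v hv
        refine ⟨FK hv, fun i j hi hj => ⟨FK (hKT i j hi hj v hv), FK (hKS i j hi hj v hv)⟩, ?_, ?_⟩
        · rw [hTd v (hKW hv)]; exact F.smul_mem _ (FK hv)
        · rw [hSd v (hKW hv)]; exact F.smul_mem _ (FK hv)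
      · rintro k hk v ⟨h1, h2, h3, h4⟩
        refine ⟨FT k hk v h1, fun i j hi hj => ⟨?_, ?_⟩, ?_, ?_⟩
        · rw [a11, if_neg hj]
          refine add_mem (FT k hk _ (h2 i j hi hj).1) (sub_mem (zero_mem _) ?_)
          split_ifs
          · exact FT j hj v h1
          · exact zero_mem _
        · rw [a21, if_neg hj]
          refine sub_mem (FT k hk _ (h2 i j hi hj).2) (sub_mem ?_ (zero_mem _))
          split_ifs
          · exact FS j hj v h1
          · exact zero_mem _
        · rw [a11, if_neg hk, if_pos rfl]
          exact add_mem (FT k hk _ h3) (sub_mem (FT k hk v h1) (zero_mem _))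
        · rw [a21, if_neg hk, if_pos rfl]
          exact sub_mem (FT k hk _ h4) (sub_mem (zero_mem _) (FS k hk v h1))
      · rintro k hk v ⟨h1, h2, h3, h4⟩
        refine ⟨FS k hk v h1, fun i j hi hj => ⟨?_, ?_⟩, ?_, ?_⟩
        · rw [a12, if_neg hj]
          refine add_mem (FS k hk _ (h2 i j hi hj).1) (sub_mem (zero_mem _) ?_)
          split_ifs
          · exact FS j hj v h1
          · exact zero_mem _
        · rw [a22]
          exact add_mem (FS k hk _ (h2 i j hi hj).2) (sub_mem (FT j hj _ (h2 i k hi hk).2)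
            (FS j hj _ (h2 i k hi hk).1))
        · rw [a12, if_neg hk, if_pos rfl]
          exact add_mem (FS k hk _ h3) (sub_mem (FS k hk v h1) (zero_mem _))
        · rw [a22, a12 d d d k, a21 d d d k, if_neg hk, if_pos rfl]
          refine add_mem (FS k hk _ h4) (sub_mem ?_ ?_)
          · exact add_mem (FS k hk _ h3) (sub_mem (FS k hk v h1) (zero_mem _))
          · exact sub_mem (FT k hk _ h4) (sub_mem (zero_mem _) (FS k hk v h1))
    exact fun v hv => (this hv).2
  have L1 : ∀ v ∈ F, ∀ i, i ≠ d → T i d v ∈ F ∧ S i d v ∈ F := by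
    let F0 : Submodule ℂ M :=
      { carrier := {v | v ∈ F ∧ ∀ i, i ≠ d → T i d v ∈ F ∧ S i d v ∈ F}
        zero_mem' := by simp
        add_mem' := by
          rintro a b ⟨h1, h2⟩ ⟨h1', h2'⟩
          refine ⟨add_mem h1 h1', fun i hi => ?_⟩
          simp only [map_add]
          exact ⟨add_mem (h2 i hi).1 (h2' i hi).1, add_mem (h2 i hi).2 (h2' i hi).2⟩
        smul_mem' := by
          rintro r a ⟨h1, h2⟩
          refine ⟨F.smul_mem r h1, fun i hi => ?_⟩
          simp only [map_smul]
          exact ⟨F.smul_mem r (h2 i hi).1, F.smul_mem r (h2 i hi).2⟩ }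
    have : F ≤ F0 := by
      apply FC
      refine ⟨?_, ?_, ?_⟩
      · intro v hv
        refine ⟨FK hv, fun i hi => ?_⟩
        rw [hT i hi v (hKW hv), hS i hi v (hKW hv)]
        exact ⟨zero_mem _, zero_mem _⟩
      · rintro k hk v ⟨h1, h2⟩
        refine ⟨FT k hk v h1, fun i hi => ⟨?_, ?_⟩⟩
        · rw [a11, if_pos rfl]
          refine add_mem (FT k hk _ (h2 i hi).1) (sub_mem ((L0 v h1).1 i k hi hk).1 ?_)
          split_ifs
          · exact (L0 v h1).2.1
          · exact zero_mem _
        · rw [a21, if_pos rfl]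
          refine sub_mem (FT k hk _ (h2 i hi).2) (sub_mem ?_ ((L0 v h1).1 i k hi hk).2)
          split_ifs
          · exact (L0 v h1).2.2
          · exact zero_mem _
      · rintro k hk v ⟨h1, h2⟩
        refine ⟨FS k hk v h1, fun i hi => ⟨?_, ?_⟩⟩
        · rw [a12, if_pos rfl]
          refine add_mem (FS k hk _ (h2 i hi).1) (sub_mem ((L0 v h1).1 i k hi hk).2 ?_)
          split_ifs
          · exact (L0 v h1).2.2
          · exact zero_mem _
        · rw [a22]
          refine add_mem (FS k hk _ (h2 i hi).2) (sub_mem ?_ ?_)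
          · exact (L0 _ ((L0 v h1).1 i k hi hk).2).2.1
          · exact (L0 _ ((L0 v h1).1 i k hi hk).1).2.2
    exact fun v hv => (this hv).2
  have allT : ∀ i j, ∀ v ∈ F, T i j v ∈ F := by
    intro i j v hv
    by_cases hi : i = d <;> by_cases hj : j = d
    · subst hi; subst hj; exact (L0 v hv).2.1
    · subst hi; exact FT j hj v hv
    · subst hj; exact (L1 v hv i hi).1
    · exact ((L0 v hv).1 i j hi hj).1
  have allS : ∀ i j, ∀ v ∈ F, S i j v ∈ F := by
    intro i j v hv
    by_cases hi : i = d <;> by_cases hj : j = d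
    · subst hi; subst hj; exact (L0 v hv).2.2
    · subst hi; exact FS j hj v hv
    · subst hj; exact (L1 v hv i hi).2
    · exact ((L0 v hv).1 i j hi hj).2
  have hF : F ≤ K ⊔ ⨆ p : ℕ, (T d d).eigenspace (c + (p + 1)) := by
    apply FC
    refine ⟨le_sup_left, ?_, ?_⟩
    · intro k hk v hv
      refine shift_mem (T d d) (T d k) c 0 ?_ K (fun v hv => hTd v (hKW hv)) v hv
      intro v
      rw [a11, if_pos rfl, if_neg hk]; simp
    · intro k hk v hv
      refine shift_mem (T d d) (S d k) c 0 ?_ K (fun v hv => hTd v (hKW hv)) v hv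
      intro v
      rw [a12, if_pos rfl, if_neg hk]; simp
  rcases irr F allT allS with h0 | h0
  · left
    rw [eq_bot_iff, ← h0]; exact FK
  · right
    intro w hw
    have : w ∈ F := by rw [h0]; trivial
    obtain ⟨k, hk, g, hg, rfl⟩ := Submodule.mem_sup.1 (hF this)
    have hgW : g ∈ W := by
      have := sub_mem hw (hKW hk)
      simpa using this
    have := eig_disj (T d d) c g (hTd g hgW) hg
    rw [this, add_zero]; exact hk

/-- Comparison of highest weight modules with the same highest weight. -/
theorem exists_embedding {m : ℕ} {V M : Type*} [AddCommGroup V] [Module ℂ V]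
    [AddCommGroup M] [Module ℂ M] (lam : Fin m → ℂ)
    {E : Fin m → Fin m → Module.End ℂ V} (hE : GLRel E)
    {F : Fin m → Fin m → Module.End ℂ M} (hF : GLRel F)
    (x : V) (hx : x ≠ 0) (xup : ∀ i j, i < j → E i j x = 0) (xd : ∀ i, E i i x = lam i • x)
    (Virr : ∀ U : Submodule ℂ V, (∀ i j, ∀ v ∈ U, E i j v ∈ U) → U = ⊥ ∨ U = ⊤)
    (W : Submodule ℂ M) (WF : ∀ i j, ∀ v ∈ W, F i j v ∈ W)
    (Wirr : ∀ U : Submodule ℂ M, U ≤ W → (∀ i j, ∀ v ∈ U, F i j v ∈ U) → U = ⊥ ∨ W ≤ U)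
    (y : M) (hyW : y ∈ W) (hy : y ≠ 0) (yup : ∀ i j, i < j → F i j y = 0)
    (yd : ∀ i, F i i y = lam i • y) :
    ∃ f : V →ₗ[ℂ] M, Function.Injective f ∧ (∀ v, f v ∈ W) ∧
      ∀ i j v, f (E i j v) = F i j (f v) := by
  let G : Fin m → Fin m → Module.End ℂ (V × M) := fun i j => LinearMap.prodMap (E i j) (F i j)
  have hG : GLRel G := by
    intro i j k l
    have h1 := hE i j k l
    have h2 := hF i j k l
    refine LinearMap.ext fun v => Prod.ext ?_ ?_
    · have := LinearMap.congr_fun h1 v.1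
      simp only [LinearMap.sub_apply, Module.End.mul_apply] at this
      simp only [LinearMap.sub_apply, Module.End.mul_apply, G, LinearMap.prodMap_apply,
        Prod.fst_sub, this]
      split_ifs <;> simp
    · have := LinearMap.congr_fun h2 v.2
      simp only [LinearMap.sub_apply, Module.End.mul_apply] at this
      simp only [LinearMap.sub_apply, Module.End.mul_apply, G, LinearMap.prodMap_apply,
        Prod.snd_sub, this]
      split_ifs <;> simp
  have aG := hG.apply
  let h : V × M := (x, y)
  have hup : ∀ i j, i < j → G i j h = 0 := fun i j hij => by
    simp [G, h, xup i j hij, yup i j hij]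
  have hd : ∀ i, G i i h = lam i • h := fun i => by simp [G, h, xd i, yd i]
  let C : Set (Submodule ℂ (V × M)) := {U | h ∈ U ∧ ∀ i j, j < i → ∀ v ∈ U, G i j v ∈ U}
  let N : Submodule ℂ (V × M) := sInf C
  have NC : ∀ U ∈ C, N ≤ U := fun U hU => sInf_le hU
  have Nh : h ∈ N := by
    rw [Submodule.mem_sInf]; exact fun U hU => hU.1
  have Nlow : ∀ i j, j < i → ∀ v ∈ N, G i j v ∈ N := by
    intro i j hij v hv
    rw [Submodule.mem_sInf] at hv ⊢
    exact fun U hU => hU.2 i j hij v (hv U hU)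
  have Nall : ∀ v ∈ N, ∀ i j, G i j v ∈ N := by
    let N0 : Submodule ℂ (V × M) :=
      { carrier := {v | v ∈ N ∧ ∀ i j, G i j v ∈ N}
        zero_mem' := by simp
        add_mem' := by
          rintro a b ⟨h1, h2⟩ ⟨h1', h2'⟩
          refine ⟨add_mem h1 h1', fun i j => ?_⟩
          rw [map_add]
          exact add_mem (h2 i j) (h2' i j)
        smul_mem' := by
          rintro r a ⟨h1, h2⟩
          refine ⟨N.smul_mem r h1, fun i j => ?_⟩
          rw [map_smul]
          exact N.smul_mem r (h2 i j) }
    have : N ≤ N0 := by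
      apply NC
      refine ⟨⟨Nh, fun i j => ?_⟩, ?_⟩
      · rcases lt_trichotomy i j with hij | hij | hij
        · rw [hup i j hij]; exact zero_mem _
        · subst hij; rw [hd]; exact N.smul_mem _ Nh
        · exact Nlow i j hij h Nh
      · rintro k l hkl v ⟨h1, h2⟩
        refine ⟨Nlow k l hkl v h1, fun i j => ?_⟩
        rw [aG]
        refine add_mem (Nlow k l hkl _ (h2 i j)) (sub_mem ?_ ?_)
        · split_ifs
          · exact h2 i l
          · exact zero_mem _
        · split_ifs
          · exact h2 k j
          · exact zero_mem _
    exact fun v hv => (this hv).2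
  have NW : ∀ v ∈ N, v.2 ∈ W := by
    have : N ≤ W.comap (LinearMap.snd ℂ V M) := by
      apply NC
      refine ⟨hyW, ?_⟩
      intro i j _ v hv
      exact WF i j _ hv
    exact fun v hv => this hv
  -- the grading operator
  let H : Module.End ℂ (V × M) := ∑ k, (k.val : ℂ) • G k k
  let c : ℂ := ∑ k, (k.val : ℂ) * lam k
  have Hh : ∀ a : ℂ, ∀ v : V × M, (∀ i, G i i v = lam i • v) → H v = c • v := by
    intro a v hv
    simp only [H, c, LinearMap.sum_apply, LinearMap.smul_apply, hv, Finset.sum_smul, smul_smul]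
  have HG : ∀ i j v, H (G i j v) = G i j (H v) + ((i.val : ℂ) - j.val) • G i j v := by
    intro i j v
    simp only [H, LinearMap.sum_apply, LinearMap.smul_apply, map_sum, map_smul]
    have : ∀ k, (k.val : ℂ) • G k k (G i j v) = (k.val : ℂ) • G i j (G k k v)
      + ((if k = i then (k.val : ℂ) • G k j v else 0)
        - (if j = k then (k.val : ℂ) • G i k v else 0)) := by
      intro k
      rw [aG, smul_add, smul_sub, smul_ite, smul_ite, smul_zero]
    simp only [this, Finset.sum_add_distrib, Finset.sum_sub_distrib, Finset.sum_ite_eq,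
      Finset.sum_ite_eq', Finset.mem_univ, if_true, sub_smul]
  have NS : N ≤ (ℂ ∙ h) ⊔ ⨆ p : ℕ, H.eigenspace (c + (p + 1)) := by
    apply NC
    refine ⟨Submodule.mem_sup_left (Submodule.mem_span_singleton_self h), ?_⟩
    intro i j hij v hv
    have hij' : j.val < i.val := hij
    refine shift_mem H (G i j) c (i.val - j.val - 1) ?_ _ ?_ v hv
    · intro v
      rw [HG]
      congr 2
      have : ((i.val - j.val - 1 : ℕ) : ℂ) + 1 = ((i.val - j.val - 1 + 1 : ℕ) : ℂ) := by
        push_cast; rfl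
      rw [this, Nat.sub_add_cancel (by omega), Nat.cast_sub hij'.le]
    · intro v hv
      obtain ⟨a, rfl⟩ := Submodule.mem_span_singleton.1 hv
      rw [map_smul, Hh 0 h hd, smul_comm]
  -- injectivity of the first projection
  have inj : ∀ w, ((0 : V), w) ∈ N → w = 0 := by
    let K : Submodule ℂ M := N.comap (LinearMap.inr ℂ V M)
    have hK : K = ⊥ ∨ W ≤ K := by
      apply Wirr
      · intro w hw
        exact NW (0, w) hw
      · intro i j v hv
        have := Nall (0, v) hv i j
        simpa [G, K] using this
    rcases hK with hK | hK
    · intro w hw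
      have : w ∈ K := hw
      rw [hK] at this
      simpa using this
    · exfalso
      have h1 : ((0 : V), y) ∈ N := hK hyW
      obtain ⟨k, hk, g, hg, e⟩ := Submodule.mem_sup.1 (NS h1)
      obtain ⟨a, rfl⟩ := Submodule.mem_span_singleton.1 hk
      have hg' : H g = c • g := by
        have : g = ((0 : V), y) - a • h := by rw [← e]; simp
        apply Hh 0
        intro i
        rw [this, map_sub, map_smul, hd]
        have : G i i ((0 : V), y) = lam i • ((0 : V), y) := by simp [G, yd i]
        rw [this, smul_sub, smul_comm]
      rw [eig_disj H c g hg' hg, add_zero] at e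
      have e1 : a • x = 0 := congrArg Prod.fst e
      have e2 : a • y = y := congrArg Prod.snd e
      rcases smul_eq_zero.1 e1 with ha | ha
      · rw [ha, zero_smul] at e2
        exact hy e2.symm
      · exact hx ha
  let π : N →ₗ[ℂ] V := LinearMap.fst ℂ V M ∘ₗ N.subtype
  have hπ : Function.Bijective π := by
    constructor
    · rw [← LinearMap.ker_eq_bot, LinearMap.ker_eq_bot']
      rintro ⟨⟨a, b⟩, hab⟩ hz
      have ha : a = 0 := hz
      subst ha
      have hb := inj b hab
      subst hb
      rfl
    · rw [← LinearMap.range_eq_top]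
      rcases Virr (LinearMap.range π) (by
        rintro i j _ ⟨n, rfl⟩
        exact ⟨⟨G i j n.1, Nall n.1 n.2 i j⟩, rfl⟩) with h0 | h0
      · exfalso
        have : x ∈ LinearMap.range π := ⟨⟨h, Nh⟩, rfl⟩
        rw [h0] at this
        exact hx (by simpa using this)
      · exact h0
  let e : N ≃ₗ[ℂ] V := LinearEquiv.ofBijective π hπ
  let f : V →ₗ[ℂ] M := LinearMap.snd ℂ V M ∘ₗ N.subtype ∘ₗ e.symm.toLinearMap
  have hf : ∀ n : N, f n.1.1 = n.1.2 := by
    intro n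
    have : e.symm n.1.1 = n := by
      rw [LinearEquiv.symm_apply_eq]; rfl
    simp [f, this]
  have hsurj : ∀ v, ∃ n : N, n.1.1 = v := fun v => hπ.2 v
  have hfE : ∀ i j v, f (E i j v) = F i j (f v) := by
    intro i j v
    obtain ⟨n, rfl⟩ := hsurj v
    rw [hf]
    exact hf ⟨G i j n.1, Nall n.1 n.2 i j⟩
  refine ⟨f, ?_, ?_, hfE⟩
  · rw [← LinearMap.ker_eq_bot]
    rcases Virr (LinearMap.ker f) (by
      intro i j v hv
      rw [LinearMap.mem_ker] at hv ⊢
      rw [hfE, hv, map_zero]) with h0 | h0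
    · exact h0
    · exfalso
      have : x ∈ LinearMap.ker f := by rw [h0]; trivial
      rw [LinearMap.mem_ker] at this
      exact hy ((hf ⟨h, Nh⟩).symm.trans this)
  · intro v
    obtain ⟨n, rfl⟩ := hsurj v
    rw [hf]
    exact NW n.1 n.2

theorem GLRel.comp_succAbove {m : ℕ} {R : Type*} [Ring R] {E : Fin (m + 1) → Fin (m + 1) → R}
    (h : GLRel E) (d : Fin (m + 1)) : GLRel fun i j => E (d.succAbove i) (d.succAbove j) := by
  intro i j k l
  have := h (d.succAbove i) (d.succAbove j) (d.succAbove k) (d.succAbove l)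
  simpa only [Fin.succAbove_right_inj] using this

theorem yrel_tensor {n : ℕ} {lam mu : Fin n → ℂ} (A : GLRep n lam) (B : GLRep n mu) :
    YRel (R := Module.End ℂ (A.V ⊗[ℂ] B.V)) (t1 A B) (t2 A B) := by
  have key := YRel.of_commute (R := Module.End ℂ (A.V ⊗[ℂ] B.V))
    (X := fun i j => TensorProduct.map (A.E i j) LinearMap.id)
    (Y := fun i j => TensorProduct.map LinearMap.id (B.E i j)) ?_ ?_ ?_
  · have e : t2 A B = fun i j => ∑ a : Fin n, (TensorProduct.map (A.E i a) LinearMap.id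
        * TensorProduct.map LinearMap.id (B.E a j) : Module.End ℂ (A.V ⊗[ℂ] B.V)) := ?_
    · rw [e]; exact key
    funext i j
    unfold t2
    refine Finset.sum_congr rfl fun a _ => ?_
    refine TensorProduct.ext' fun x y => ?_
    simp
  · intro i j k l
    refine TensorProduct.ext' fun x y => ?_
    have := LinearMap.congr_fun (A.commRel i j k l) x
    simp only [LinearMap.sub_apply, LinearMap.comp_apply] at this
    simp only [LinearMap.sub_apply, Module.End.mul_apply, TensorProduct.map_tmul,
      LinearMap.id_apply, ← TensorProduct.sub_tmul, this]
    split_ifs <;> simp [TensorProduct.sub_tmul, TensorProduct.neg_tmul]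
  · intro i j k l
    refine TensorProduct.ext' fun x y => ?_
    have := LinearMap.congr_fun (B.commRel i j k l) y
    simp only [LinearMap.sub_apply, LinearMap.comp_apply] at this
    simp only [LinearMap.sub_apply, Module.End.mul_apply, TensorProduct.map_tmul,
      LinearMap.id_apply, ← TensorProduct.tmul_sub, this]
    split_ifs <;> simp [TensorProduct.tmul_sub, TensorProduct.tmul_neg]
  · intro i j k l
    refine TensorProduct.ext' fun x y => ?_
    simp

theorem GLRep.rel {n : ℕ} {lam : Fin n → ℂ} (A : GLRep n lam) :
    GLRel (R := Module.End ℂ A.V) A.E := A.commRel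

/-- Embedding of `L(λ')` in `L(λ)` as the space killed by the operators `E i d`. -/
theorem emb_col {m : ℕ} {lam : Fin (m + 1) → ℂ} (A : GLRep (m + 1) lam) (d : Fin (m + 1))
    (hd : ∀ i, i ≠ d → A.E i d A.hv = 0) (A' : GLRep m fun i => lam (d.succAbove i)) :
    ∃ f : A'.V →ₗ[ℂ] A.V, Function.Injective f ∧
      (∀ v, (∀ i, i ≠ d → A.E i d (f v) = 0) ∧ A.E d d (f v) = lam d • f v) ∧
      ∀ i j v, f (A'.E i j v) = A.E (d.succAbove i) (d.succAbove j) (f v) := by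
  have aE := A.rel.apply
  let W : Submodule ℂ A.V :=
    { carrier := {v | (∀ i, i ≠ d → A.E i d v = 0) ∧ A.E d d v = lam d • v}
      zero_mem' := by simp
      add_mem' := by
        rintro a b ⟨h1, h2⟩ ⟨h1', h2'⟩
        refine ⟨fun i hi => ?_, ?_⟩
        · rw [map_add, h1 i hi, h1' i hi, add_zero]
        · rw [map_add, h2, h2', smul_add]
      smul_mem' := by
        rintro r a ⟨h1, h2⟩
        refine ⟨fun i hi => ?_, ?_⟩
        · rw [map_smul, h1 i hi, smul_zero]
        · rw [map_smul, h2, smul_comm] }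
  refine exists_embedding _ A'.rel (A.rel.comp_succAbove d) A'.hv A'.hv_ne A'.hv_upper A'.hv_diag
    A'.irreducible W ?_ ?_ A.hv ⟨hd, A.hv_diag d⟩ A.hv_ne ?_ ?_
  · rintro i j v ⟨h1, h2⟩
    refine ⟨fun k hk => ?_, ?_⟩
    · rw [aE, if_neg (Fin.succAbove_ne d i).symm, h1 k hk, h1 _ (Fin.succAbove_ne d i)]
      simp
    · rw [aE, if_neg (Fin.succAbove_ne d i).symm, if_neg (Fin.succAbove_ne d j), h2]
      simp
  · intro U hU hs
    refine key (YRel.of_gl A.rel) d U W hU (lam d) 0 (fun i hi w hw => hw.1 i hi)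
      (by simp) (fun w hw => hw.2) (by simp) ?_ (by simp) (fun U' h _ => A.irreducible U' h)
    intro i j hi hj w hw
    obtain ⟨i, rfl⟩ := Fin.exists_succAbove_eq hi
    obtain ⟨j, rfl⟩ := Fin.exists_succAbove_eq hj
    exact hs i j w hw
  · intro i j hij
    exact A.hv_upper _ _ (Fin.strictMono_succAbove d hij)
  · intro i
    exact A.hv_diag _

/-- Embedding of `L(λ')` in `L(λ)` as the space killed by the operators `E d i`. -/
theorem emb_row {m : ℕ} {lam : Fin (m + 1) → ℂ} (A : GLRep (m + 1) lam) (d : Fin (m + 1))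
    (hd : ∀ i, i ≠ d → A.E d i A.hv = 0) (A' : GLRep m fun i => lam (d.succAbove i)) :
    ∃ f : A'.V →ₗ[ℂ] A.V, Function.Injective f ∧
      (∀ v, (∀ i, i ≠ d → A.E d i (f v) = 0) ∧ A.E d d (f v) = lam d • f v) ∧
      ∀ i j v, f (A'.E i j v) = A.E (d.succAbove i) (d.succAbove j) (f v) := by
  have aE := A.rel.apply
  let W : Submodule ℂ A.V :=
    { carrier := {v | (∀ i, i ≠ d → A.E d i v = 0) ∧ A.E d d v = lam d • v}
      zero_mem' := by simp
      add_mem' := by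
        rintro a b ⟨h1, h2⟩ ⟨h1', h2'⟩
        refine ⟨fun i hi => ?_, ?_⟩
        · rw [map_add, h1 i hi, h1' i hi, add_zero]
        · rw [map_add, h2, h2', smul_add]
      smul_mem' := by
        rintro r a ⟨h1, h2⟩
        refine ⟨fun i hi => ?_, ?_⟩
        · rw [map_smul, h1 i hi, smul_zero]
        · rw [map_smul, h2, smul_comm] }
  refine exists_embedding _ A'.rel (A.rel.comp_succAbove d) A'.hv A'.hv_ne A'.hv_upper A'.hv_diag
    A'.irreducible W ?_ ?_ A.hv ⟨hd, A.hv_diag d⟩ A.hv_ne ?_ ?_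
  · rintro i j v ⟨h1, h2⟩
    refine ⟨fun k hk => ?_, ?_⟩
    · rw [aE, if_neg (Fin.succAbove_ne d j), h1 k hk, h1 _ (Fin.succAbove_ne d j)]
      simp
    · rw [aE, if_neg (Fin.succAbove_ne d i).symm, if_neg (Fin.succAbove_ne d j), h2]
      simp
  · intro U hU hs
    refine key (YRel.of_gl A.rel).flip d U W hU (-lam d) 0 (fun i hi w hw => ?_)
      (by simp) (fun w hw => ?_) (by simp) ?_ (by simp) (fun U' h _ => A.irreducible U' ?_)
    · rw [LinearMap.neg_apply, hw.1 i hi, neg_zero]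
    · rw [LinearMap.neg_apply, hw.2, neg_smul]
    · intro i j hi hj w hw
      obtain ⟨i, rfl⟩ := Fin.exists_succAbove_eq hi
      obtain ⟨j, rfl⟩ := Fin.exists_succAbove_eq hj
      exact neg_mem (hs j i w hw)
    · intro i j v hv
      exact neg_mem_iff.1 (h j i v hv)
  · intro i j hij
    exact A.hv_upper _ _ (Fin.strictMono_succAbove d hij)
  · intro i
    exact A.hv_diag _

theorem end_col {m : ℕ} {lam mu : Fin (m + 1) → ℂ} (A : GLRep (m + 1) lam)
    (B : GLRep (m + 1) mu) (d : Fin (m + 1)) (hirr : YangianIrred2 A B)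
    (hA : ∀ i, i ≠ d → A.E i d A.hv = 0) (hB : ∀ i, i ≠ d → B.E i d B.hv = 0)
    (A' : GLRep m fun i => lam (d.succAbove i)) (B' : GLRep m fun i => mu (d.succAbove i)) :
    YangianIrred2 A' B' := by
  obtain ⟨f, finj, fW, fE⟩ := emb_col A d hA A'
  obtain ⟨g, ginj, gW, gE⟩ := emb_col B d hB B'
  intro U hU1 hU2
  let Φ := TensorProduct.map f g
  have Φinj : Function.Injective Φ := TensorProduct.map_injective_of_flat_flat f g finj ginj
  have e1 : ∀ i j t, t1 A B (d.succAbove i) (d.succAbove j) (Φ t) = Φ (t1 A' B' i j t) := by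
    intro i j t
    refine LinearMap.congr_fun (f := t1 A B (d.succAbove i) (d.succAbove j) ∘ₗ Φ)
      (g := Φ ∘ₗ t1 A' B' i j) (TensorProduct.ext' fun x y => ?_) t
    simp [t1, Φ, fE, gE]
  have e2 : ∀ i j t, t2 A B (d.succAbove i) (d.succAbove j) (Φ t) = Φ (t2 A' B' i j t) := by
    intro i j t
    refine LinearMap.congr_fun (f := t2 A B (d.succAbove i) (d.succAbove j) ∘ₗ Φ)
      (g := Φ ∘ₗ t2 A' B' i j) (TensorProduct.ext' fun x y => ?_) t
    simp [t2, Φ, fE, gE, Fin.sum_univ_succAbove _ d, (fW x).1 _ (Fin.succAbove_ne d i)]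
  have z1 : ∀ i, i ≠ d → ∀ t, t1 A B i d (Φ t) = 0 := by
    intro i hi t
    refine LinearMap.congr_fun (f := t1 A B i d ∘ₗ Φ) (g := 0) (TensorProduct.ext' fun x y => ?_) t
    simp [t1, Φ, (fW x).1 i hi, (gW y).1 i hi]
  have z2 : ∀ i, i ≠ d → ∀ t, t2 A B i d (Φ t) = 0 := by
    intro i hi t
    refine LinearMap.congr_fun (f := t2 A B i d ∘ₗ Φ) (g := 0) (TensorProduct.ext' fun x y => ?_) t
    simp [t2, Φ, Fin.sum_univ_succAbove _ d, (fW x).1 i hi,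
      fun a => (gW y).1 _ (Fin.succAbove_ne d a)]
  have d1 : ∀ t, t1 A B d d (Φ t) = (lam d + mu d) • Φ t := by
    intro t
    refine LinearMap.congr_fun (f := t1 A B d d ∘ₗ Φ) (g := (lam d + mu d) • Φ)
      (TensorProduct.ext' fun x y => ?_) t
    simp [t1, Φ, (fW x).2, (gW y).2, add_smul, TensorProduct.smul_tmul']
  have d2 : ∀ t, t2 A B d d (Φ t) = (lam d * mu d) • Φ t := by
    intro t
    refine LinearMap.congr_fun (f := t2 A B d d ∘ₗ Φ) (g := (lam d * mu d) • Φ)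
      (TensorProduct.ext' fun x y => ?_) t
    simp [t2, Φ, Fin.sum_univ_succAbove _ d, (fW x).2, (gW y).2,
      fun a => (gW y).1 _ (Fin.succAbove_ne d a)]
    rw [TensorProduct.smul_tmul', smul_smul, mul_comm, ← TensorProduct.smul_tmul']
  have main := key (yrel_tensor A B) d (U.map Φ) (LinearMap.range Φ) LinearMap.map_le_range
    (lam d + mu d) (lam d * mu d)
    (by rintro i hi _ ⟨t, rfl⟩; exact z1 i hi t)
    (by rintro i hi _ ⟨t, rfl⟩; exact z2 i hi t)
    (by rintro _ ⟨t, rfl⟩; exact d1 t)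
    (by rintro _ ⟨t, rfl⟩; exact d2 t)
    (by
      rintro i j hi hj _ ⟨t, ht, rfl⟩
      obtain ⟨i, rfl⟩ := Fin.exists_succAbove_eq hi
      obtain ⟨j, rfl⟩ := Fin.exists_succAbove_eq hj
      exact ⟨_, hU1 i j t ht, (e1 i j t).symm⟩)
    (by
      rintro i j hi hj _ ⟨t, ht, rfl⟩
      obtain ⟨i, rfl⟩ := Fin.exists_succAbove_eq hi
      obtain ⟨j, rfl⟩ := Fin.exists_succAbove_eq hj
      exact ⟨_, hU2 i j t ht, (e2 i j t).symm⟩)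
    hirr
  rcases main with h0 | h0
  · left
    rw [eq_bot_iff]
    intro u hu
    have hu' : Φ u ∈ U.map Φ := ⟨u, hu, rfl⟩
    rw [h0, Submodule.mem_bot] at hu'
    exact Φinj (hu'.trans (map_zero Φ).symm)
  · right
    rw [eq_top_iff]
    intro t _
    obtain ⟨u, hu, e⟩ := h0 ⟨t, rfl⟩
    rw [← Φinj e]; exact hu

theorem end_row {m : ℕ} {lam mu : Fin (m + 1) → ℂ} (A : GLRep (m + 1) lam)
    (B : GLRep (m + 1) mu) (d : Fin (m + 1)) (hirr : YangianIrred2 A B)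
    (hA : ∀ i, i ≠ d → A.E d i A.hv = 0) (hB : ∀ i, i ≠ d → B.E d i B.hv = 0)
    (A' : GLRep m fun i => lam (d.succAbove i)) (B' : GLRep m fun i => mu (d.succAbove i)) :
    YangianIrred2 A' B' := by
  obtain ⟨f, finj, fW, fE⟩ := emb_row A d hA A'
  obtain ⟨g, ginj, gW, gE⟩ := emb_row B d hB B'
  intro U hU1 hU2
  let Φ := TensorProduct.map f g
  have Φinj : Function.Injective Φ := TensorProduct.map_injective_of_flat_flat f g finj ginj
  have e1 : ∀ i j t, t1 A B (d.succAbove i) (d.succAbove j) (Φ t) = Φ (t1 A' B' i j t) := by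
    intro i j t
    refine LinearMap.congr_fun (f := t1 A B (d.succAbove i) (d.succAbove j) ∘ₗ Φ)
      (g := Φ ∘ₗ t1 A' B' i j) (TensorProduct.ext' fun x y => ?_) t
    simp [t1, Φ, fE, gE]
  have e2 : ∀ i j t, t2 A B (d.succAbove i) (d.succAbove j) (Φ t) = Φ (t2 A' B' i j t) := by
    intro i j t
    refine LinearMap.congr_fun (f := t2 A B (d.succAbove i) (d.succAbove j) ∘ₗ Φ)
      (g := Φ ∘ₗ t2 A' B' i j) (TensorProduct.ext' fun x y => ?_) t
    simp [t2, Φ, fE, gE, Fin.sum_univ_succAbove _ d, (gW y).1 _ (Fin.succAbove_ne d j)]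
  have z1 : ∀ i, i ≠ d → ∀ t, t1 A B d i (Φ t) = 0 := by
    intro i hi t
    refine LinearMap.congr_fun (f := t1 A B d i ∘ₗ Φ) (g := 0) (TensorProduct.ext' fun x y => ?_) t
    simp [t1, Φ, (fW x).1 i hi, (gW y).1 i hi]
  have z2 : ∀ i, i ≠ d → ∀ t, t2 A B d i (Φ t) = 0 := by
    intro i hi t
    refine LinearMap.congr_fun (f := t2 A B d i ∘ₗ Φ) (g := 0) (TensorProduct.ext' fun x y => ?_) t
    simp [t2, Φ, Fin.sum_univ_succAbove _ d, (gW y).1 i hi,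
      fun a => (fW x).1 _ (Fin.succAbove_ne d a)]
  have d1 : ∀ t, t1 A B d d (Φ t) = (lam d + mu d) • Φ t := by
    intro t
    refine LinearMap.congr_fun (f := t1 A B d d ∘ₗ Φ) (g := (lam d + mu d) • Φ)
      (TensorProduct.ext' fun x y => ?_) t
    simp [t1, Φ, (fW x).2, (gW y).2, add_smul, TensorProduct.smul_tmul']
  have d2 : ∀ t, t2 A B d d (Φ t) = (lam d * mu d) • Φ t := by
    intro t
    refine LinearMap.congr_fun (f := t2 A B d d ∘ₗ Φ) (g := (lam d * mu d) • Φ)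
      (TensorProduct.ext' fun x y => ?_) t
    simp [t2, Φ, Fin.sum_univ_succAbove _ d, (fW x).2, (gW y).2,
      fun a => (fW x).1 _ (Fin.succAbove_ne d a)]
    rw [TensorProduct.smul_tmul', smul_smul, mul_comm, ← TensorProduct.smul_tmul']
  have main := key (yrel_tensor A B).flip d (U.map Φ) (LinearMap.range Φ) LinearMap.map_le_range
    (-(lam d + mu d)) (lam d * mu d)
    (by rintro i hi _ ⟨t, rfl⟩; rw [LinearMap.neg_apply, z1 i hi t, neg_zero])
    (by rintro i hi _ ⟨t, rfl⟩; exact z2 i hi t)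
    (by rintro _ ⟨t, rfl⟩; rw [LinearMap.neg_apply, d1 t, neg_smul])
    (by rintro _ ⟨t, rfl⟩; exact d2 t)
    (by
      rintro i j hi hj _ ⟨t, ht, rfl⟩
      obtain ⟨i, rfl⟩ := Fin.exists_succAbove_eq hi
      obtain ⟨j, rfl⟩ := Fin.exists_succAbove_eq hj
      exact neg_mem ⟨_, hU1 j i t ht, (e1 j i t).symm⟩)
    (by
      rintro i j hi hj _ ⟨t, ht, rfl⟩
      obtain ⟨i, rfl⟩ := Fin.exists_succAbove_eq hi
      obtain ⟨j, rfl⟩ := Fin.exists_succAbove_eq hj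
      exact ⟨_, hU2 j i t ht, (e2 j i t).symm⟩)
    (fun U' h1 h2 => hirr U' (fun i j v hv => neg_mem_iff.1 (h1 j i v hv))
      (fun i j v hv => h2 j i v hv))
  rcases main with h0 | h0
  · left
    rw [eq_bot_iff]
    intro u hu
    have hu' : Φ u ∈ U.map Φ := ⟨u, hu, rfl⟩
    rw [h0, Submodule.mem_bot] at hu'
    exact Φinj (hu'.trans (map_zero Φ).symm)
  · right
    rw [eq_top_iff]
    intro t _
    obtain ⟨u, hu, e⟩ := h0 ⟨t, rfl⟩
    rw [← Φinj e]; exact hu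

/-- Let `n = m + 1 ≥ 2`.  If the `Y(gl_n)`-module
`L(λ) ⊗ L(μ)` is irreducible, then both `Y(gl_{n−1})`-modules
`L(λ_−) ⊗ L(μ_−)` and `L(λ_+) ⊗ L(μ_+)` are irreducible, where
`λ_− = (λ_1, …, λ_{n−1})` and `λ_+ = (λ_2, …, λ_n)`. -/
theorem truncated_tensor_irreducible_of_irreducible
    (m : ℕ) (hm : 1 ≤ m) (lam mu : Fin (m + 1) → ℂ)
    (hlam : IsGLHighestWeight (m + 1) lam) (hmu : IsGLHighestWeight (m + 1) mu)
    (A : GLRep (m + 1) lam) (B : GLRep (m + 1) mu)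
    (hirr : YangianIrred2 A B) :
    (∀ (A' : GLRep m fun i : Fin m => lam i.castSucc)
        (B' : GLRep m fun i : Fin m => mu i.castSucc),
        YangianIrred2 A' B') ∧
    (∀ (A' : GLRep m fun i : Fin m => lam i.succ)
        (B' : GLRep m fun i : Fin m => mu i.succ),
        YangianIrred2 A' B') := by
  refine ⟨?_, ?_⟩
  · have h := end_col A B (Fin.last m) hirr
      (fun i hi => A.hv_upper _ _ (Fin.lt_last_iff_ne_last.2 hi))
      (fun i hi => B.hv_upper _ _ (Fin.lt_last_iff_ne_last.2 hi))
    have e : ∀ nu : Fin (m + 1) → ℂ,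
        (fun i : Fin m => nu (Fin.succAbove (Fin.last m) i)) = fun i : Fin m => nu i.castSucc := by
      intro nu
      funext i
      simp
    rw [e lam, e mu] at h
    exact h
  · have h := end_row A B 0 hirr
      (fun i hi => A.hv_upper _ _ (Fin.pos_iff_ne_zero.2 hi))
      (fun i hi => B.hv_upper _ _ (Fin.pos_iff_ne_zero.2 hi))
    have e : ∀ nu : Fin (m + 1) → ℂ,
        (fun i : Fin m => nu (Fin.succAbove 0 i)) = fun i : Fin m => nu i.succ := by
      intro nu
      funext i
      simp
    rw [e lam, e mu] at h
    exact h
end
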